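/- arXiv:1704.06195 — 2 statements merged into one kernel-verified Lean document; each statement's English description precedes it below -/
import Mathlib

section
/- Let A ∈ M_n(ℂ) be a positive semidefinite contraction (0 ≤ A ≤ I) all of whose diagonal entries are at most α ≥ 0, and let r ≥ 1 be an integer. Then there exists a partition [n] = S_1 ⊔ S_2 ⊔ ⋯ ⊔ S_r such that for every k ∈ [r], the largest eigenvalue of the principal submatrix A(S_k) is at most 4·r^{−1/4} + α. -/
open ComplexOrder

/-- the principal submatrix `A(S)` -/
def subMat {n : ℕ} (A : Matrix (Fin n) (Fin n) ℂ) (S : Finset (Fin n)) :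
    Matrix {x // x ∈ S} {x // x ∈ S} ℂ :=
  A.submatrix Subtype.val Subtype.val

namespace Multiaffine

open Finset

variable {N : Type*} [Fintype N] [DecidableEq N]

/-- The value at `z` of the multiaffine polynomial `∑ S, c S * ∏ i ∈ S, X i`. -/
def ev {K : Type*} [CommRing K] [Algebra ℝ K] (c : Finset N → ℝ) (z : N → K) : K :=
  ∑ S, algebraMap ℝ K (c S) * ∏ i ∈ S, z i

/-- The coefficients of the partial derivative with respect to all the variables in `T`. -/
def pd (T : Finset N) (c : Finset N → ℝ) : Finset N → ℝ :=
  fun S => if Disjoint S T then c (S ∪ T) else 0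

/-- Translation by `t` of the coordinates in `G`. -/
def shift {K : Type*} [Add K] (G : Finset N) (t : K) (z : N → K) : N → K :=
  fun i => if i ∈ G then z i + t else z i

/-- The derivative of order `#G - 1` along the diagonal of `G`, divided by `(#G - 1)!`. -/
def groupDeriv (G : Finset N) (c : Finset N → ℝ) : Finset N → ℝ :=
  ∑ k ∈ G, pd (G.erase k) c

/-- Nonvanishing on the product of open upper half-planes. -/
def Stable (c : Finset N → ℝ) : Prop :=
  ∀ z : N → ℂ, (∀ i, 0 < (z i).im) → ev c z ≠ 0

omit [Fintype N] in
@[simp] lemma pd_empty (c : Finset N → ℝ) : pd ∅ c = c := by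
  ext S; simp [pd]

omit [Fintype N] in
lemma pd_pd {T U : Finset N} (h : Disjoint T U) (c : Finset N → ℝ) :
    pd T (pd U c) = pd (T ∪ U) c := by
  ext S
  by_cases hST : Disjoint S T
  · by_cases hSU : Disjoint S U
    · have : Disjoint (S ∪ T) U := disjoint_union_left.2 ⟨hSU, h⟩
      have h2 : Disjoint S (T ∪ U) := disjoint_union_right.2 ⟨hST, hSU⟩
      simp [pd, hST, this, h2, union_assoc]
    · simp [pd, hST, hSU]
  · simp [pd, hST]

omit [Fintype N] in
lemma pd_pd_of_not_disjoint {T U : Finset N} (h : ¬ Disjoint T U) (c : Finset N → ℝ) :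
    pd T (pd U c) = 0 := by
  ext S
  simp [pd, h]

omit [Fintype N] in
lemma pd_sum {ι : Type*} (s : Finset ι) (T : Finset N) (f : ι → Finset N → ℝ) :
    pd T (∑ k ∈ s, f k) = ∑ k ∈ s, pd T (f k) := by
  ext S
  by_cases h : Disjoint S T <;> simp [pd, h]

section Eval

variable {K : Type*} [CommRing K] [Algebra ℝ K]

omit [DecidableEq N] in
lemma ev_sum {ι : Type*} (s : Finset ι) (f : ι → Finset N → ℝ) (z : N → K) :
    ev (∑ k ∈ s, f k) z = ∑ k ∈ s, ev (f k) z := by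
  simp only [ev, Finset.sum_apply, map_sum, Finset.sum_mul]
  exact Finset.sum_comm

omit [DecidableEq N] in
lemma ev_zero (z : N → K) : ev (0 : Finset N → ℝ) z = 0 := by simp [ev]

/-- Taylor expansion of a multiaffine polynomial. -/
lemma ev_add (c : Finset N → ℝ) (z v : N → K) :
    ev c (v + z) = ∑ T, (∏ i ∈ T, v i) * ev (pd T c) z := by
  have h1 : ∀ S : Finset N, algebraMap ℝ K (c S) * ∏ i ∈ S, (v + z) i =
      ∑ T, if T ⊆ S then
        algebraMap ℝ K (c S) * ((∏ i ∈ T, v i) * ∏ i ∈ S \ T, z i) else 0 := by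
    intro S
    simp only [Pi.add_apply]
    rw [Finset.prod_add, Finset.mul_sum, ← Finset.sum_filter]
    apply Finset.sum_congr _ (fun _ _ => rfl)
    ext T; simp
  simp only [ev, h1]
  rw [Finset.sum_comm]
  refine Finset.sum_congr rfl fun T _ => ?_
  rw [Finset.mul_sum, ← Finset.sum_filter]
  have h2 : ∀ S : Finset N, (∏ i ∈ T, v i) * (algebraMap ℝ K (pd T c S) * ∏ i ∈ S, z i) =
      if Disjoint S T then
        (∏ i ∈ T, v i) * (algebraMap ℝ K (c (S ∪ T)) * ∏ i ∈ S, z i) else 0 := by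
    intro S
    by_cases h : Disjoint S T <;> simp [pd, h]
  simp only [h2]
  rw [← Finset.sum_filter]
  refine Finset.sum_nbij' (fun S => S \ T) (fun S => S ∪ T) ?_ ?_ ?_ ?_ ?_
  · intro S _; simp [sdiff_disjoint]
  · intro S _; simp
  · intro S hS; simp only [mem_filter, mem_univ, true_and] at hS
    exact sdiff_union_of_subset hS
  · intro S hS; simp only [mem_filter, mem_univ, true_and] at hS
    exact union_sdiff_cancel_right hS
  · intro S hS; simp only [mem_filter, mem_univ, true_and] at hS
    rw [sdiff_union_of_subset hS]; ring

lemma ev_shift (c : Finset N → ℝ) (G : Finset N) (t : K) (z : N → K) :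
    ev c (shift G t z) = ∑ T ∈ G.powerset, t ^ #T * ev (pd T c) z := by
  have : shift G t z = (fun i => if i ∈ G then t else 0) + z := by
    ext i; by_cases h : i ∈ G <;> simp [shift, h, add_comm]
  rw [this, ev_add, ← Finset.sum_subset (Finset.subset_univ G.powerset)]
  · refine Finset.sum_congr rfl fun T hT => ?_
    rw [Finset.prod_congr rfl (g := fun _ => t), Finset.prod_const]
    intro i hi; simp [mem_powerset.1 hT hi]
  · intro T _ hT
    rw [mem_powerset, not_subset] at hT
    obtain ⟨i, hi, hiG⟩ := hT
    rw [Finset.prod_eq_zero hi (by simp [hiG]), zero_mul]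

lemma ev_shift_singleton (c : Finset N → ℝ) (l : N) (t : K) (z : N → K) :
    ev c (shift {l} t z) = ev c z + t * ev (pd {l} c) z := by
  rw [ev_shift, ← insert_empty_eq, Finset.sum_powerset_insert (by simp)]
  simp

lemma ev_pd_shift {G T : Finset N} (h : G ⊆ T) (c : Finset N → ℝ) (t : K) (z : N → K) :
    ev (pd T c) (shift G t z) = ev (pd T c) z := by
  rw [ev_shift, Finset.sum_eq_single ∅]
  · simp
  · intro S hS hne
    rw [pd_pd_of_not_disjoint, ev_zero, mul_zero]
    obtain ⟨i, hi⟩ := nonempty_iff_ne_empty.2 hne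
    exact not_disjoint_iff.2 ⟨i, hi, h (mem_powerset.1 hS hi)⟩
  · simp

end Eval

omit [DecidableEq N] in
lemma ev_ofReal (c : Finset N → ℝ) (a : N → ℝ) :
    ev c (fun i => (a i : ℂ)) = (ev c a : ℝ) := by
  simp [ev]

omit [DecidableEq N] in
lemma continuous_ev (c : Finset N → ℝ) : Continuous fun z : N → ℂ => ev c z := by
  unfold ev
  fun_prop

/-- The polynomial `w ↦ ev c (shift G w a)`. -/
noncomputable def diag {K : Type*} [CommRing K] [Algebra ℝ K] (c : Finset N → ℝ) (G : Finset N)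
    (a : N → K) : Polynomial K :=
  ∑ T ∈ G.powerset, Polynomial.monomial #T (ev (pd T c) a)

section Diag

variable {K : Type*} [CommRing K] [Algebra ℝ K]

lemma eval_diag (c : Finset N → ℝ) (G : Finset N) (a : N → K) (w : K) :
    (diag c G a).eval w = ev c (shift G w a) := by
  simp [diag, ev_shift, Polynomial.eval_finsetSum, mul_comm]

lemma coeff_diag (c : Finset N → ℝ) (G : Finset N) (a : N → K) (m : ℕ) :
    (diag c G a).coeff m = ∑ T ∈ G.powersetCard m, ev (pd T c) a := by
  simp only [diag, Polynomial.finsetSum_coeff, Polynomial.coeff_monomial]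
  rw [← Finset.sum_filter, Finset.powersetCard_eq_filter]

lemma natDegree_diag_le (c : Finset N → ℝ) (G : Finset N) (a : N → K) :
    (diag c G a).natDegree ≤ #G := by
  refine Polynomial.natDegree_sum_le_of_forall_le _ _ fun T hT => ?_
  exact (Polynomial.natDegree_monomial_le _).trans (card_le_card (mem_powerset.1 hT))

lemma coeff_diag_card (c : Finset N → ℝ) (G : Finset N) (a : N → K) :
    (diag c G a).coeff #G = ev (pd G c) a := by
  simp [coeff_diag]

lemma coeff_diag_zero (c : Finset N → ℝ) (G : Finset N) (a : N → K) :
    (diag c G a).coeff 0 = ev c a := by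
  simp [coeff_diag]

lemma coeff_diag_one (c : Finset N → ℝ) (G : Finset N) (a : N → K) :
    (diag c G a).coeff 1 = ∑ k ∈ G, ev (pd {k} c) a := by
  simp [coeff_diag, powersetCard_one]

lemma coeff_diag_card_sub_one (c : Finset N → ℝ) {G : Finset N} (hG : G.Nonempty) (a : N → K) :
    (diag c G a).coeff (#G - 1) = ev (groupDeriv G c) a := by
  rw [coeff_diag, groupDeriv, ev_sum]
  symm
  refine Finset.sum_bij (fun k _ => G.erase k) ?_ ?_ ?_ ?_
  · intro k hk; simp [mem_powersetCard, erase_subset, card_erase_of_mem hk]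
  · intro k hk l hl h
    by_contra hne
    have : k ∈ G.erase l := mem_erase.2 ⟨hne, hk⟩
    rw [← h] at this; simp at this
  · intro T hT
    rw [mem_powersetCard] at hT
    have h1 : #(G \ T) = 1 := by
      rw [card_sdiff_of_subset hT.1, hT.2]; have := hG.card_pos; omega
    obtain ⟨k, hk⟩ := card_eq_one.1 h1
    refine ⟨k, (mem_sdiff.1 (hk ▸ mem_singleton_self k)).1, ?_⟩
    rw [erase_eq, ← hk, Finset.sdiff_sdiff_eq_self hT.1]
  · intros; rfl

end Diag

lemma Stable.pd_mul_conj_im_nonpos {c : Finset N → ℝ} (hc : Stable c) (l : N) (z : N → ℂ)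
    (hz : ∀ i, 0 ≤ (z i).im) :
    (ev (pd {l} c) z * (starRingEnd ℂ) (ev c z)).im ≤ 0 := by
  have key : ∀ z : N → ℂ, (∀ i, 0 < (z i).im) →
      (ev (pd {l} c) z * (starRingEnd ℂ) (ev c z)).im ≤ 0 := by
    intro z hz
    by_contra! hpos
    set p := ev (pd {l} c) z with hp
    set q := ev c z with hq
    have hp0 : p ≠ 0 := by rintro h; simp [h] at hpos
    have hn : 0 < Complex.normSq p := Complex.normSq_pos.2 hp0
    have hdiv : 0 < (-q / p).im := by
      rw [Complex.div_im]
      simp only [Complex.neg_im, Complex.neg_re, Complex.mul_im, Complex.conj_re,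
        Complex.conj_im] at hpos ⊢
      rw [← sub_div]
      apply div_pos _ hn
      linarith
    refine hc (shift {l} (-q / p) z) ?_ ?_
    · intro i
      by_cases h : i = l
      · simp only [shift, h, mem_singleton, if_true, Complex.add_im]
        linarith [hz l]
      · simpa [shift, h] using hz i
    · rw [ev_shift_singleton, ← hp, ← hq, div_mul_cancel₀ _ hp0]; ring
  have hlim : Filter.Tendsto (fun ε : ℝ => fun i => z i + (ε : ℂ) * Complex.I)
      (nhdsWithin 0 (Set.Ioi 0)) (nhds z) := by
    have : Continuous (fun ε : ℝ => fun i => z i + (ε : ℂ) * Complex.I) := by fun_prop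
    have h := (this.tendsto 0).mono_left (nhdsWithin_le_nhds (s := Set.Ioi 0))
    simpa using h
  have hcont : Continuous fun z : N → ℂ => (ev (pd {l} c) z * (starRingEnd ℂ) (ev c z)).im :=
    Complex.continuous_im.comp ((continuous_ev _).mul
      (Complex.continuous_conj.comp (continuous_ev _)))
  refine le_of_tendsto ((hcont.tendsto z).comp hlim) ?_
  filter_upwards [self_mem_nhdsWithin] with ε hε
  refine key _ fun i => ?_
  simp only [Complex.add_im, Complex.mul_im, Complex.ofReal_re, Complex.I_im, Complex.ofReal_im,
    Complex.I_re]
  have := hz i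
  have : 0 < ε := hε
  nlinarith

/-- The Rayleigh inequality. -/
lemma Stable.rayleigh {c : Finset N → ℝ} (hc : Stable c) (k l : N) (a : N → ℝ) :
    ev c a * ev (pd {k} (pd {l} c)) a ≤ ev (pd {k} c) a * ev (pd {l} c) a := by
  have h := hc.pd_mul_conj_im_nonpos l (shift {k} Complex.I fun i => (a i : ℂ)) ?_
  · rw [ev_shift_singleton, ev_shift_singleton] at h
    simp only [ev_ofReal] at h
    simp at h
    linarith
  · intro i
    by_cases h : i = k <;> simp [shift, h]

lemma Stable.norm_le_norm_shift {c : Finset N → ℝ} (hc : Stable c) (G : Finset N) {s : ℝ}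
    (hs : 0 ≤ s) (z : N → ℂ) (hz : ∀ i, 0 ≤ (z i).im) :
    ‖ev c z‖ ≤ ‖ev c (shift G (s * Complex.I) z)‖ := by
  induction G using Finset.induction_on with
  | empty =>
    have : shift ∅ (s * Complex.I) z = z := by ext i; simp [shift]
    rw [this]
  | insert l G hl ih =>
    refine ih.trans ?_
    set z' := shift G (s * Complex.I) z with hz'
    have hz'0 : ∀ i, 0 ≤ (z' i).im := by
      intro i
      by_cases h : i ∈ G
      · simp only [hz', shift, h, if_true]
        simp only [Complex.add_im, Complex.mul_im, Complex.ofReal_re, Complex.I_im,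
          Complex.ofReal_im, Complex.I_re]
        have := hz i
        nlinarith
      · simpa [hz', shift, h] using hz i
    have h1 : shift (insert l G) (s * Complex.I) z = shift {l} (s * Complex.I) z' := by
      ext i
      by_cases h : i = l
      · subst h; simp [shift, hz', hl]
      · by_cases h2 : i ∈ G <;> simp [shift, hz', h, h2]
    rw [h1, ev_shift_singleton]
    have h2 := hc.pd_mul_conj_im_nonpos l z' hz'0
    rw [← sq_le_sq₀ (norm_nonneg _) (norm_nonneg _), ← Complex.normSq_eq_norm_sq,
      ← Complex.normSq_eq_norm_sq]
    simp only [Complex.normSq_apply, Complex.add_re, Complex.add_im, Complex.mul_re,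
      Complex.mul_im, Complex.ofReal_re, Complex.ofReal_im, Complex.I_re, Complex.I_im,
      Complex.conj_re, Complex.conj_im] at h2 ⊢
    nlinarith [mul_nonneg hs (neg_nonneg.2 h2), sq_nonneg (s * (ev (pd {l} c) z').re),
      sq_nonneg (s * (ev (pd {l} c) z').im)]

lemma Stable.stable_groupDeriv {c : Finset N → ℝ} (hc : Stable c) {G : Finset N} (hG : G.Nonempty)
    (hcG : Stable (pd G c)) : Stable (groupDeriv G c) := by
  intro z hz h0
  set F := diag c G z with hF
  have hlead0 : F.coeff #G ≠ 0 := by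
    rw [hF, coeff_diag_card]; exact hcG z hz
  have hdeg : F.natDegree = #G :=
    le_antisymm (natDegree_diag_le _ _ _) (Polynomial.le_natDegree_of_ne_zero hlead0)
  have hF0 : F ≠ 0 := by rintro h; simp [h] at hlead0
  have hnext : F.nextCoeff = 0 := by
    rw [Polynomial.nextCoeff_of_natDegree_pos (by rw [hdeg]; exact hG.card_pos), hdeg, hF,
      coeff_diag_card_sub_one _ hG, h0]
  have hroots : ∀ x ∈ F.roots, x.im < 0 := by
    intro x hx
    by_contra! hx0
    rw [Polynomial.mem_roots hF0, Polynomial.IsRoot, hF, eval_diag] at hx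
    refine hc _ (fun i => ?_) hx
    by_cases h : i ∈ G
    · simp only [shift, h, if_true, Complex.add_im]; linarith [hz i]
    · simpa [shift, h] using hz i
  have hsplit := IsAlgClosed.splits F
  rw [hsplit.nextCoeff_eq_neg_sum_roots_mul_leadingCoeff] at hnext
  have hsum : F.roots.sum = 0 := by
    rcases mul_eq_zero.1 hnext with h | h
    · simp [Polynomial.leadingCoeff, hdeg, hlead0] at h
    · exact h
  have hcard : F.roots ≠ 0 := by
    rw [← Multiset.card_pos, ← hsplit.natDegree_eq_card_roots, hdeg]
    exact hG.card_pos
  have him : (F.roots.map Complex.im).sum = 0 := by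
    have := map_multiset_sum Complex.imAddGroupHom F.roots
    rw [hsum] at this
    simpa using this.symm
  have hlt : (F.roots.map Complex.im).sum < (F.roots.map fun _ => (0 : ℝ)).sum :=
    Multiset.sum_lt_sum_of_nonempty hcard hroots
  simp [him] at hlt

end Multiaffine

namespace Polynomial

open Finset

lemma mul_eval_pos_of_im_nonpos {p k : ℝ[X]} {y : ℝ} {m : ℕ} (hm : 0 < m)
    (hp : p.eval y ≠ 0) (hk : k.eval y ≠ 0)
    (him : ∀ w : ℂ, 0 < w.im →
      (aeval w p * (starRingEnd ℂ) (aeval w ((X - C y) ^ m * k))).im ≤ 0) :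
    m = 1 ∧ 0 < p.eval y * k.eval y := by
  have key : ∀ θ ∈ Set.Ioo 0 Real.pi, 0 ≤ p.eval y * k.eval y * Real.sin (m * θ) := by
    intro θ hθ
    set u : ℂ := Complex.exp (θ * Complex.I) with hu
    have huim : 0 < u.im := by
      rw [hu, Complex.exp_ofReal_mul_I_im]; exact Real.sin_pos_of_mem_Ioo hθ
    have hcont : Continuous fun ε : ℝ =>
        (aeval ((y : ℂ) + ε * u) p * (starRingEnd ℂ) (u ^ m * aeval ((y : ℂ) + ε * u) k)).im := by
      have h1 : Continuous fun ε : ℝ => (y : ℂ) + ε * u := by fun_prop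
      exact Complex.continuous_im.comp (((Polynomial.continuous_aeval p).comp h1).mul
        (Complex.continuous_conj.comp
          (continuous_const.mul ((Polynomial.continuous_aeval k).comp h1))))
    have hlim := (hcont.tendsto 0).mono_left (nhdsWithin_le_nhds (s := Set.Ioi 0))
    have hle := le_of_tendsto hlim (b := 0) (by
      filter_upwards [self_mem_nhdsWithin] with ε hε
      have hε : 0 < ε := hε
      have h := him ((y : ℂ) + ε * u) (by simp [hε, huim])
      have h2 : aeval ((y : ℂ) + ε * u) p *
          (starRingEnd ℂ) (aeval ((y : ℂ) + ε * u) ((X - C y) ^ m * k)) =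
          ((ε ^ m : ℝ) : ℂ) * (aeval ((y : ℂ) + ε * u) p *
            (starRingEnd ℂ) (u ^ m * aeval ((y : ℂ) + ε * u) k)) := by
        simp only [map_mul, map_pow, map_sub, aeval_X, aeval_C, Complex.coe_algebraMap,
          add_sub_cancel_left, Complex.conj_ofReal, Complex.ofReal_pow]
        ring
      rw [h2, Complex.im_ofReal_mul] at h
      exact nonpos_of_mul_nonpos_right h (pow_pos hε m))
    have hum : u ^ m = Complex.exp ((m * θ : ℝ) * Complex.I) := by
      rw [hu, ← Complex.exp_nat_mul]; congr 1; push_cast; ring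
    have hev : ∀ q : ℝ[X], aeval (y : ℂ) q = ((q.eval y : ℝ) : ℂ) := fun q => by
      rw [← Complex.coe_algebraMap, aeval_algebraMap_apply, coe_aeval_eq_eval]
    simp only [Complex.ofReal_zero, zero_mul, add_zero, hev, map_mul, Complex.conj_ofReal] at hle
    rw [hum] at hle
    have h3 : (((p.eval y : ℝ) : ℂ) * ((starRingEnd ℂ) (Complex.exp ((m * θ : ℝ) * Complex.I)) *
        ((k.eval y : ℝ) : ℂ))).im = - (p.eval y * k.eval y * Real.sin (m * θ)) := by
      rw [Complex.im_ofReal_mul, mul_comm _ ((k.eval y : ℝ) : ℂ), Complex.im_ofReal_mul,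
        Complex.conj_im, Complex.exp_ofReal_mul_I_im]
      ring
    rw [h3] at hle
    linarith
  have hm' : (0 : ℝ) < m := by exact_mod_cast hm
  have hm1 : (1 : ℝ) ≤ m := by exact_mod_cast hm
  have hpos : 0 < p.eval y * k.eval y := by
    have h := key (Real.pi / (2 * m)) ⟨by positivity, by
      rw [div_lt_iff₀ (by positivity)]; nlinarith [Real.pi_pos]⟩
    have h2 : (m : ℝ) * (Real.pi / (2 * m)) = Real.pi / 2 := by field_simp
    rw [h2, Real.sin_pi_div_two, mul_one] at h
    exact lt_of_le_of_ne h (mul_ne_zero hp hk).symm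
  refine ⟨?_, hpos⟩
  by_contra hne
  have hm2 : (2 : ℝ) ≤ m := by exact_mod_cast (by omega : 2 ≤ m)
  have h := key (3 * Real.pi / (2 * m)) ⟨by positivity, by
    rw [div_lt_iff₀ (by positivity)]; nlinarith [Real.pi_pos]⟩
  have h2 : (m : ℝ) * (3 * Real.pi / (2 * m)) = Real.pi / 2 + Real.pi := by field_simp; ring
  rw [h2, Real.sin_add_pi, Real.sin_pi_div_two] at h
  linarith

/-- Partial fraction decomposition of a rational function `h / ∏ (X - y i)` mapping the upper
half-plane to the closed lower half-plane: the residues are nonnegative. -/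
lemma exists_partialFractions_of_im_nonpos {ι : Type*} [DecidableEq ι] (y : ι → ℝ)
    (s : Finset ι) (h : ℝ[X]) (hdeg : h.natDegree ≤ #s)
    (him : ∀ w : ℂ, 0 < w.im →
      (aeval w h * (starRingEnd ℂ) (aeval w (∏ i ∈ s, (X - C (y i))))).im ≤ 0) :
    ∃ (e : ℝ) (c : ι → ℝ), (∀ i ∈ s, 0 ≤ c i) ∧
      h = C e * ∏ i ∈ s, (X - C (y i)) + ∑ i ∈ s, C (c i) * ∏ j ∈ s.erase i, (X - C (y j)) := by
  induction s using Finset.strongInduction generalizing h with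
  | H s ih =>
    by_cases hex : ∃ i ∈ s, h.eval (y i) = 0
    · obtain ⟨i, hi, h0⟩ := hex
      obtain ⟨k, rfl⟩ := dvd_iff_isRoot.2 h0
      have hk : k.natDegree ≤ #(s.erase i) := by
        by_cases hk0 : k = 0
        · simp [hk0]
        rw [natDegree_mul (X_sub_C_ne_zero _) hk0, natDegree_X_sub_C] at hdeg
        rw [card_erase_of_mem hi]; omega
      obtain ⟨e, c, hc, hkeq⟩ := ih (s.erase i) (erase_ssubset hi) k hk (by
        intro w hw
        have h1 := him w hw
        rw [← mul_prod_erase s _ hi, map_mul, map_mul, map_mul] at h1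
        have h2 : ∀ u p q : ℂ, u * p * ((starRingEnd ℂ) u * q) =
            (Complex.normSq u : ℝ) * (p * q) := by
          intro u p q; rw [← Complex.mul_conj]; ring
        rw [h2, Complex.im_ofReal_mul] at h1
        refine nonpos_of_mul_nonpos_right h1 (Complex.normSq_pos.2 ?_)
        intro h3
        have := congrArg Complex.im h3
        simp at this
        exact hw.ne' this)
      refine ⟨e, Function.update c i 0, ?_, ?_⟩
      · intro j hj
        by_cases hji : j = i
        · simp [hji]
        · simpa [hji] using hc j (mem_erase.2 ⟨hji, hj⟩)
      · rw [← mul_prod_erase s _ hi, ← add_sum_erase s _ hi]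
        simp only [Function.update_self, map_zero, zero_mul, zero_add]
        conv_lhs => rw [hkeq]
        rw [mul_add, Finset.mul_sum]
        congr 1
        · ring
        · refine Finset.sum_congr rfl fun j hj => ?_
          rw [Function.update_of_ne (ne_of_mem_erase hj),
            ← mul_prod_erase (s.erase j) _ (mem_erase.2 ⟨(ne_of_mem_erase hj).symm, hi⟩),
            erase_right_comm]
          ring
    · push Not at hex
      have hloc : ∀ i ∈ s, s.filter (fun j => y j = y i) = {i} ∧
          0 < h.eval (y i) * (∏ j ∈ s.erase i, (X - C (y j))).eval (y i) := by
        intro i hi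
        have hsplit := prod_filter_mul_prod_filter_not s (fun j => y j = y i)
          (fun j => (X - C (y j) : ℝ[X]))
        rw [Finset.prod_congr rfl (g := fun _ => X - C (y i))
          (fun j hj => by rw [(mem_filter.1 hj).2]), Finset.prod_const] at hsplit
        rw [← hsplit] at him
        have hk : (∏ j ∈ s with ¬ y j = y i, (X - C (y j))).eval (y i) ≠ 0 := by
          rw [eval_prod, prod_ne_zero_iff]
          intro j hj
          rw [eval_sub, eval_X, eval_C, sub_ne_zero]
          exact fun h => (mem_filter.1 hj).2 h.symm
        have hm : 0 < #{j ∈ s | y j = y i} := card_pos.2 ⟨i, mem_filter.2 ⟨hi, rfl⟩⟩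
        obtain ⟨h1, h2⟩ := mul_eval_pos_of_im_nonpos hm (hex i hi) hk him
        obtain ⟨j, hj⟩ := card_eq_one.1 h1
        have hij : s.filter (fun j => y j = y i) = {i} := by
          have : i ∈ s.filter (fun j => y j = y i) := mem_filter.2 ⟨hi, rfl⟩
          rw [hj] at this ⊢
          rw [mem_singleton.1 this]
        refine ⟨hij, ?_⟩
        rwa [show s.erase i = s.filter (fun j => ¬ y j = y i) by
          rw [erase_eq, ← hij, filter_not]]
      have hne : ∀ i ∈ s, (∏ j ∈ s.erase i, (X - C (y j))).eval (y i) ≠ 0 := fun i hi h0 => by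
        have := (hloc i hi).2
        simp [h0] at this
      refine ⟨h.coeff #s, fun i => h.eval (y i) / (∏ j ∈ s.erase i, (X - C (y j))).eval (y i),
        ?_, ?_⟩
      · intro i hi
        have := (hloc i hi).2
        exact div_nonneg_iff.2 (mul_nonneg_iff.1 this.le)
      · have hinj : Set.InjOn y s := by
          intro i hi j hj hij
          have : j ∈ s.filter (fun j => y j = y i) := mem_filter.2 ⟨hj, hij.symm⟩
          rw [(hloc i hi).1] at this
          exact (mem_singleton.1 this).symm
        have hmon : (∏ i ∈ s, (X - C (y i))).Monic := monic_prod_X_sub_C _ _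
        have hnd : (∏ i ∈ s, (X - C (y i))).natDegree = #s := natDegree_finsetProd_X_sub_C_eq_card _ _
        rw [← sub_eq_iff_eq_add']
        refine eq_of_degrees_lt_of_eval_index_eq s hinj ?_ ?_ ?_
        · refine (degree_lt_iff_coeff_zero _ _).2 fun m hm => ?_
          rw [coeff_sub, coeff_C_mul]
          rcases hm.eq_or_lt with rfl | hm
          · conv_lhs => rw [← hnd, hmon.coeff_natDegree, hnd]
            ring
          · rw [coeff_eq_zero_of_natDegree_lt (hdeg.trans_lt hm),
              coeff_eq_zero_of_natDegree_lt (hnd.trans_lt hm)]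
            ring
        · refine (degree_sum_le _ _).trans_lt ((Finset.sup_lt_iff (WithBot.bot_lt_coe _)).2 ?_)
          intro i hi
          rw [← smul_eq_C_mul]
          refine (degree_smul_le _ _).trans_lt ?_
          rw [degree_eq_natDegree (monic_prod_X_sub_C _ _).ne_zero,
            natDegree_finsetProd_X_sub_C_eq_card, card_erase_of_mem hi]
          exact_mod_cast Nat.sub_lt (card_pos.2 ⟨i, hi⟩) one_pos
        · intro i hi
          rw [eval_sub, eval_mul, eval_prod, Finset.prod_eq_zero hi (by simp), mul_zero, sub_zero,
            eval_finsetSum, Finset.sum_eq_single_of_mem i hi]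
          · rw [eval_mul, eval_C, div_mul_cancel₀ _ (hne i hi)]
          · intro j hj hji
            rw [eval_mul, eval_prod (s.erase j),
              Finset.prod_eq_zero (mem_erase.2 ⟨hji.symm, hi⟩) (by simp), mul_zero]

end Polynomial

namespace Multiaffine

open Finset Polynomial

variable {N : Type*} [Fintype N] [DecidableEq N]

lemma aeval_diag_ofReal (c : Finset N → ℝ) (G : Finset N) (a : N → ℝ) (w : ℂ) :
    aeval w (diag c G a) = ev c (shift G w fun i => (a i : ℂ)) := by
  rw [ev_shift, diag, map_sum]
  refine Finset.sum_congr rfl fun T _ => ?_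
  rw [aeval_monomial, ev_ofReal, Complex.coe_algebraMap, mul_comm]

omit [Fintype N] in
lemma shift_ofReal_im_nonneg (G : Finset N) (a : N → ℝ) {w : ℂ} (hw : 0 ≤ w.im) (i : N) :
    0 ≤ (shift G w (fun i => (a i : ℂ)) i).im := by
  by_cases h : i ∈ G <;> simp [shift, h, hw]

lemma Stable.aeval_diag_ne_zero {c : Finset N → ℝ} (hc : Stable c) {G : Finset N} {a : N → ℝ}
    (h0 : diag c G a ≠ 0) {w : ℂ} (hw : 0 < w.im) : aeval w (diag c G a) ≠ 0 := by
  intro hzero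
  set F := (diag c G a).map (algebraMap ℝ ℂ) with hF
  have hF0 : F ≠ 0 := (Polynomial.map_ne_zero_iff (algebraMap ℝ ℂ).injective).2 h0
  have hsub : (fun s : ℝ => w - s * Complex.I) '' Set.Icc 0 w.im ⊆ (F.rootSet ℂ) := by
    rintro _ ⟨s, ⟨hs0, hs1⟩, rfl⟩
    rw [mem_rootSet]
    refine ⟨hF0, ?_⟩
    rw [hF, aeval_map_algebraMap, ← norm_le_zero_iff]
    have h := hc.norm_le_norm_shift G hs0 (shift G (w - s * Complex.I) fun i => (a i : ℂ))
      (shift_ofReal_im_nonneg G a (by simpa using hs1))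
    have h2 : shift G (s * Complex.I) (shift G (w - s * Complex.I) fun i => (a i : ℂ)) =
        shift G w fun i => (a i : ℂ) := by
      ext i; by_cases h : i ∈ G <;> simp [shift, h, add_assoc]
    rw [h2, ← aeval_diag_ofReal, ← aeval_diag_ofReal, hzero, norm_zero] at h
    exact h
  refine ((Set.Icc_infinite hw).image ?_) ((rootSet_finite F ℂ).subset hsub)
  intro s _ t _ hst
  simpa using hst

lemma Stable.exists_diag_eq_prod {c : Finset N → ℝ} (hc : Stable c) {G : Finset N} {a : N → ℝ}
    (hpos : ∀ T ⊆ G, 0 < ev (pd T c) a) :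
    ∃ y : Fin #G → ℝ, (∀ i, y i < 0) ∧
      diag c G a = C (ev (pd G c) a) * ∏ i, (X - C (y i)) := by
  set F := diag c G a with hF
  have hlead : F.coeff #G = ev (pd G c) a := coeff_diag_card _ _ _
  have hlead0 : F.coeff #G ≠ 0 := by rw [hlead]; exact (hpos G subset_rfl).ne'
  have hdeg : F.natDegree = #G :=
    le_antisymm (natDegree_diag_le _ _ _) (Polynomial.le_natDegree_of_ne_zero hlead0)
  have hF0 : F ≠ 0 := by rintro h; simp [h] at hlead0
  have hsplit : F.Splits := by
    refine Splits.of_splits_map (algebraMap ℝ ℂ) (IsAlgClosed.splits _) fun w hw => ?_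
    rw [mem_roots ((Polynomial.map_ne_zero_iff (algebraMap ℝ ℂ).injective).2 hF0), IsRoot,
      eval_map_algebraMap] at hw
    rcases lt_trichotomy w.im 0 with h | h | h
    · refine absurd ?_ (hc.aeval_diag_ne_zero hF0 (w := (starRingEnd ℂ) w) (by simpa using h))
      rw [← hF, aeval_conj, hw, map_zero]
    · exact ⟨w.re, Complex.ext (by simp) (by simp [h])⟩
    · exact absurd hw (hc.aeval_diag_ne_zero hF0 h)
  obtain ⟨y, hy⟩ : ∃ y : Fin #G → ℝ, F.roots = univ.val.map y := by
    have hcard : F.roots.toList.length = #G := by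
      rw [Multiset.length_toList, ← hsplit.natDegree_eq_card_roots, hdeg]
    refine ⟨fun i => F.roots.toList.get (i.cast hcard.symm), ?_⟩
    rw [Fin.univ_val_map]
    have h := List.ofFn_congr hcard F.roots.toList.get
    rw [List.ofFn_get] at h
    rw [← h, Multiset.coe_toList]
  refine ⟨y, fun i => ?_, ?_⟩
  · have hmem : y i ∈ F.roots := by
      rw [hy]; exact Multiset.mem_map_of_mem y (mem_univ_val i)
    rw [mem_roots hF0, IsRoot, hF, eval_diag, ev_shift] at hmem
    by_contra! h
    refine (lt_of_lt_of_le (hpos ∅ (empty_subset _)) ?_).ne' hmem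
    have h1 := Finset.single_le_sum (f := fun T => y i ^ #T * ev (pd T c) a)
      (fun T hT => mul_nonneg (pow_nonneg h _) (hpos T (mem_powerset.1 hT)).le)
      (empty_mem_powerset G)
    simpa using h1
  · conv_lhs => rw [hsplit.eq_prod_roots]
    rw [leadingCoeff, hdeg, hlead, hy, Multiset.map_map]
    rfl

lemma ev_groupDeriv_shift (c : Finset N → ℝ) (G : Finset N) (t : ℝ) (a : N → ℝ) :
    ev (groupDeriv G c) (shift G t a) =
      ev (groupDeriv G c) a + #G * t * ev (pd G c) a := by
  rw [groupDeriv, ev_sum, ev_sum, mul_assoc, ← nsmul_eq_mul, ← Finset.sum_const,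
    ← Finset.sum_add_distrib]
  refine Finset.sum_congr rfl fun k hk => ?_
  have h : shift G t a = shift (G.erase k) t (shift {k} t a) := by
    ext i
    by_cases hik : i = k
    · subst hik; simp [shift, hk]
    · simp [shift, hik]
  rw [h, ev_pd_shift subset_rfl, ev_shift_singleton,
    pd_pd (disjoint_singleton_left.2 (notMem_erase k G)), ← insert_eq, insert_erase hk]

/-- Passing to the derivative along a group `G` of variables allows one to translate the
coordinates in `G` by `-δ` without increasing the barrier functions of the other variables. -/
lemma Stable.barrier_shift {c : Finset N → ℝ} (hc : Stable c) {G : Finset N} (hG : G.Nonempty)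
    {a : N → ℝ} (hpos : ∀ T ⊆ G, 0 < ev (pd T c) a) {u δ : ℝ} (hu : 0 < u)
    (hbar : ∀ k ∈ G, ev (pd {k} c) a ≤ u * ev c a)
    (hδ : (#G : ℝ) ^ 2 * δ * u ≤ (#G - 1) ^ 2) :
    0 < ev (groupDeriv G c) (shift G (-δ) a) ∧
    ∀ l v, ev (pd {l} c) a ≤ v * ev c a →
      ev (groupDeriv G (pd {l} c)) (shift G (-δ) a) ≤
        v * ev (groupDeriv G c) (shift G (-δ) a) := by
  obtain ⟨y, hy, hF⟩ := hc.exists_diag_eq_prod hpos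
  set E := ev (pd G c) a with hE
  have hE0 : 0 < E := hpos G subset_rfl
  have hr : (0 : ℝ) < #G := by exact_mod_cast hG.card_pos
  have hne : (univ : Finset (Fin #G)).Nonempty := by
    rw [← card_pos, card_fin]; exact hG.card_pos
  have hcard : #(univ : Finset (Fin #G)) = #G := card_fin _
  have hpred : (∏ i : Fin #G, (X - C (y i))).coeff (#G - 1) = - ∑ i, y i := by
    have := prod_X_sub_C_coeff_card_pred univ y hne.card_pos
    rwa [hcard] at this
  have hzero : ∀ s : Finset (Fin #G), (∏ i ∈ s, (X - C (y i))).coeff 0 = ∏ i ∈ s, (- y i) := by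
    intro s; simp [coeff_zero_eq_eval_zero, eval_prod]
  set P := ∏ i, (- y i) with hP
  have hP0 : 0 < P := Finset.prod_pos fun i _ => neg_pos.2 (hy i)
  have herase : ∀ i, ∏ j ∈ univ.erase i, (- y j) = P / (- y i) := by
    intro i
    rw [eq_div_iff (neg_pos.2 (hy i)).ne', prod_erase_mul _ _ (mem_univ i)]
  have hone : (∏ i : Fin #G, (X - C (y i))).coeff 1 = P * ∑ i, 1 / (- y i) := by
    have h := coeff_derivative (∏ i : Fin #G, (X - C (y i))) 0
    rw [derivative_prod_finset, finsetSum_coeff] at h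
    simp only [derivative_X_sub_C, mul_one, hzero, herase] at h
    simp only [zero_add, Nat.cast_zero, mul_one] at h
    rw [← h, Finset.mul_sum]
    exact Finset.sum_congr rfl fun i _ => by ring
  have hc0 : ev c a = E * P := by
    rw [← coeff_diag_zero c G a, hF, coeff_C_mul, hzero]
  have hgd : ev (groupDeriv G c) a = E * - ∑ i, y i := by
    rw [← coeff_diag_card_sub_one c hG a, hF, coeff_C_mul, hpred]
  have hharm : ∑ i, 1 / (- y i) ≤ #G * u := by
    have h1 : (diag c G a).coeff 1 ≤ #G * (u * ev c a) := by
      rw [coeff_diag_one, ← nsmul_eq_mul]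
      exact Finset.sum_le_card_nsmul _ _ _ hbar
    rw [hF, coeff_C_mul, hone, hc0] at h1
    have h2 : (E * P) * ∑ i, 1 / (- y i) ≤ (E * P) * (#G * u) := by linarith
    exact le_of_mul_le_mul_left h2 (mul_pos hE0 hP0)
  set A := - ∑ i, y i - #G * δ with hA
  have hAi : ∀ i, - y i ≤ A := by
    intro i
    have hcs := Finset.sum_sq_le_sum_mul_sum_of_sq_le_mul (univ.erase i) (r := fun _ => (1 : ℝ))
      (f := fun j => - y j) (g := fun j => 1 / (- y j)) (fun j _ => (neg_pos.2 (hy j)).le)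
      (fun j _ => (one_div_pos.2 (neg_pos.2 (hy j))).le)
      (fun j _ => by rw [one_pow, mul_one_div_cancel (neg_pos.2 (hy j)).ne'])
    rw [Finset.sum_const, card_erase_of_mem (mem_univ i), hcard, nsmul_eq_mul, mul_one,
      Nat.cast_sub hG.card_pos, Nat.cast_one] at hcs
    have hD0 : 0 ≤ ∑ j ∈ univ.erase i, (- y j) :=
      Finset.sum_nonneg fun j _ => (neg_pos.2 (hy j)).le
    have hle : ∑ j ∈ univ.erase i, 1 / (- y j) ≤ #G * u :=
      (Finset.sum_le_sum_of_subset_of_nonneg (erase_subset _ _)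
        fun j _ _ => (one_div_pos.2 (neg_pos.2 (hy j))).le).trans hharm
    have h3 : (#G * u) * (#G * δ) ≤ (#G * u) * ∑ j ∈ univ.erase i, (- y j) := by
      have := mul_le_mul_of_nonneg_left hle hD0
      nlinarith
    have h4 := le_of_mul_le_mul_left h3 (mul_pos hr hu)
    have h5 := add_sum_erase univ (fun j => - y j) (mem_univ i)
    rw [Finset.sum_neg_distrib (s := univ)] at h5
    linarith
  have hA0 : 0 < A := by
    obtain ⟨i, -⟩ := hne
    exact (neg_pos.2 (hy i)).trans_le (hAi i)
  have hval : ev (groupDeriv G c) (shift G (-δ) a) = E * A := by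
    rw [ev_groupDeriv_shift, hgd]; ring
  refine ⟨hval ▸ mul_pos hE0 hA0, fun l v hv => ?_⟩
  obtain ⟨e, b, hb, hH⟩ := exists_partialFractions_of_im_nonpos y univ (diag (pd {l} c) G a)
    (by rw [hcard]; exact natDegree_diag_le _ _ _) (by
      intro w hw
      have h := hc.pd_mul_conj_im_nonpos l _ (shift_ofReal_im_nonneg G a hw.le)
      rw [← aeval_diag_ofReal, ← aeval_diag_ofReal, hF, map_mul, aeval_C, map_mul,
        Complex.coe_algebraMap, Complex.conj_ofReal, mul_left_comm, Complex.im_ofReal_mul] at h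
      exact nonpos_of_mul_nonpos_right h hE0)
  have hnd : ∀ s : Finset (Fin #G), (∏ i ∈ s, (X - C (y i))).coeff #s = 1 := by
    intro s
    have := (monic_prod_X_sub_C y s).coeff_natDegree
    rwa [natDegree_finsetProd_X_sub_C_eq_card] at this
  have hH0 : ev (pd {l} c) a = e * P + ∑ i, b i * (P / (- y i)) := by
    rw [← coeff_diag_zero (pd {l} c) G a, hH]
    simp only [coeff_add, coeff_C_mul, finsetSum_coeff, hzero, herase, ← hP]
  have hHr : ev (pd G (pd {l} c)) a = e := by
    rw [← coeff_diag_card (pd {l} c) G a, hH]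
    have h1 := hnd univ
    rw [hcard] at h1
    rw [coeff_add, coeff_C_mul, h1, finsetSum_coeff, Finset.sum_eq_zero, mul_one, add_zero]
    intro i _
    rw [coeff_C_mul, coeff_eq_zero_of_natDegree_lt, mul_zero]
    rw [natDegree_finsetProd_X_sub_C_eq_card, card_erase_of_mem (mem_univ i), hcard]
    have := hG.card_pos; omega
  have hHp : ev (groupDeriv G (pd {l} c)) a = e * (- ∑ i, y i) + ∑ i, b i := by
    rw [← coeff_diag_card_sub_one (pd {l} c) hG a, hH, coeff_add, coeff_C_mul, hpred,
      finsetSum_coeff]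
    congr 1
    refine Finset.sum_congr rfl fun i _ => ?_
    have h1 := hnd (univ.erase i)
    rw [card_erase_of_mem (mem_univ i), hcard] at h1
    rw [coeff_C_mul, h1, mul_one]
  rw [hval, ev_groupDeriv_shift, hHp, hHr]
  have h1 : e + ∑ i, b i / (- y i) ≤ v * E := by
    rw [hH0, hc0] at hv
    have h2 : P * (e + ∑ i, b i / (- y i)) ≤ P * (v * E) := by
      rw [mul_add, Finset.mul_sum]
      calc _ = e * P + ∑ i, b i * (P / (- y i)) := by
            rw [mul_comm P e]; congr 1; exact Finset.sum_congr rfl fun i _ => by ring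
        _ ≤ _ := by linarith
    exact le_of_mul_le_mul_left h2 hP0
  have h2 : ∑ i, b i ≤ (∑ i, b i / (- y i)) * A := by
    rw [Finset.sum_mul]
    refine Finset.sum_le_sum fun i _ => ?_
    have hyi := neg_pos.2 (hy i)
    rw [div_mul_eq_mul_div, le_div_iff₀ hyi]
    exact mul_le_mul_of_nonneg_left (hAi i) (hb i (mem_univ i))
  have h3 := mul_le_mul_of_nonneg_right h1 hA0.le
  rw [hA] at h2 h3 ⊢
  linarith

end Multiaffine

namespace Multiaffine

open Finset

variable {N : Type*} [DecidableEq N] {ι : Type*}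

lemma pd_groupDeriv_of_disjoint {U G : Finset N} (h : Disjoint U G) (c : Finset N → ℝ) :
    pd U (groupDeriv G c) = groupDeriv G (pd U c) := by
  rw [groupDeriv, groupDeriv, pd_sum]
  refine Finset.sum_congr rfl fun k _ => ?_
  have hk : Disjoint U (G.erase k) := h.mono_right (erase_subset _ _)
  rw [pd_pd hk, pd_pd hk.symm, union_comm]

lemma pd_groupDeriv_of_inter_eq_singleton {U G : Finset N} {k : N} (h : U ∩ G = {k})
    (c : Finset N → ℝ) : pd U (groupDeriv G c) = pd (U ∪ G) c := by
  have hk : k ∈ U ∩ G := h ▸ mem_singleton_self k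
  rw [mem_inter] at hk
  rw [groupDeriv, pd_sum, Finset.sum_eq_single_of_mem k hk.2]
  · rw [pd_pd, ← insert_erase hk.2, union_insert, erase_insert_eq_erase, erase_idem,
      insert_eq_of_mem (mem_union_left _ hk.1)]
    rw [disjoint_left]
    intro j hj hj'
    have : j ∈ U ∩ G := mem_inter.2 ⟨hj, mem_of_mem_erase hj'⟩
    rw [h, mem_singleton] at this
    exact (ne_of_mem_erase hj') this
  · intro j _ hjk
    exact pd_pd_of_not_disjoint
      (not_disjoint_iff.2 ⟨k, hk.1, mem_erase.2 ⟨hjk.symm, hk.2⟩⟩) _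

/-- The iterated derivative along the groups of variables indexed by a list. -/
def multiDeriv (G : ι → Finset N) : List ι → (Finset N → ℝ) → Finset N → ℝ
  | [], c => c
  | i :: L, c => groupDeriv (G i) (multiDeriv G L c)

/-- Translation by `t` of the coordinates in the groups indexed by a list. -/
def multiShift (G : ι → Finset N) (t : ℝ) : List ι → (N → ℝ) → N → ℝ
  | [], a => a
  | i :: L, a => shift (G i) t (multiShift G t L a)

/-- The set `U` has at most one element in each of the groups indexed by `L`. -/
def IsPartialTransversal (G : ι → Finset N) (L : List ι) (U : Finset N) : Prop :=
  ∀ i ∈ L, #(U ∩ G i) ≤ 1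

section PartialTransversal

variable {G : ι → Finset N} {L : List ι} {i : ι} {U V : Finset N}

lemma IsPartialTransversal.mono (hU : IsPartialTransversal G L U) (h : V ⊆ U) :
    IsPartialTransversal G L V :=
  fun j hj => (card_le_card (inter_subset_inter_right h)).trans (hU j hj)

lemma IsPartialTransversal.tail (hU : IsPartialTransversal G (i :: L) U) :
    IsPartialTransversal G L U :=
  fun j hj => hU j (List.mem_cons_of_mem _ hj)

lemma IsPartialTransversal.union (hU : IsPartialTransversal G L U)
    (hV : ∀ j ∈ L, Disjoint V (G j)) : IsPartialTransversal G L (U ∪ V) := by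
  intro j hj
  rw [union_inter_distrib_right, disjoint_iff_inter_eq_empty.1 (hV j hj), union_empty]
  exact hU j hj

lemma isPartialTransversal_empty : IsPartialTransversal G L ∅ := fun j _ => by simp

omit [DecidableEq N] in
lemma disjoint_of_subset_group (hG : Pairwise (Function.onFun Disjoint G)) (hi : i ∉ L)
    (hV : V ⊆ G i) : ∀ j ∈ L, Disjoint V (G j) := by
  intro j hj
  refine (hG ?_).mono_left hV
  rintro rfl
  exact hi hj

lemma IsPartialTransversal.disjoint_or_exists (hU : IsPartialTransversal G (i :: L) U) :
    Disjoint U (G i) ∨ ∃ k, U ∩ G i = {k} := by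
  rcases Nat.le_one_iff_eq_zero_or_eq_one.1 (hU i List.mem_cons_self) with h | h
  · exact Or.inl (disjoint_iff_inter_eq_empty.2 (card_eq_zero.1 h))
  · exact Or.inr (card_eq_one.1 h)

end PartialTransversal

variable [Fintype N] {G : ι → Finset N} {c : Finset N → ℝ}

lemma stable_pd_multiDeriv (hG : Pairwise (Function.onFun Disjoint G))
    (hne : ∀ i, (G i).Nonempty) (hc : ∀ U, Stable (pd U c)) {L : List ι} (hL : L.Nodup)
    {U : Finset N} (hU : IsPartialTransversal G L U) : Stable (pd U (multiDeriv G L c)) := by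
  induction L generalizing U with
  | nil => exact hc U
  | cons i L ih =>
    obtain ⟨hi, hL⟩ := List.nodup_cons.1 hL
    have hUG := hU.tail.union (disjoint_of_subset_group hG hi subset_rfl)
    rcases hU.disjoint_or_exists with h | ⟨k, h⟩
    · rw [multiDeriv, pd_groupDeriv_of_disjoint h]
      refine (ih hL hU.tail).stable_groupDeriv (hne i) ?_
      rw [pd_pd h.symm, union_comm]
      exact ih hL hUG
    · rw [multiDeriv, pd_groupDeriv_of_inter_eq_singleton h]
      exact ih hL hUG

lemma multiDeriv_barrier (hG : Pairwise (Function.onFun Disjoint G))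
    (hne : ∀ i, (G i).Nonempty) (hc : ∀ U, Stable (pd U c)) {a : N → ℝ}
    (hpos : ∀ U, 0 < ev (pd U c) a) {u δ : ℝ} (hu : 0 < u)
    (hbar : ∀ l, ev (pd {l} c) a ≤ u * ev c a)
    (hδ : ∀ i, (#(G i) : ℝ) ^ 2 * δ * u ≤ (#(G i) - 1) ^ 2) {L : List ι} (hL : L.Nodup) :
    (∀ U, IsPartialTransversal G L U →
      0 < ev (pd U (multiDeriv G L c)) (multiShift G (-δ) L a)) ∧
    ∀ l, (∀ i ∈ L, l ∉ G i) → ev (pd {l} (multiDeriv G L c)) (multiShift G (-δ) L a) ≤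
      u * ev (multiDeriv G L c) (multiShift G (-δ) L a) := by
  induction L with
  | nil => exact ⟨fun U _ => hpos U, fun l _ => hbar l⟩
  | cons i L ih =>
    obtain ⟨hi, hL⟩ := List.nodup_cons.1 hL
    obtain ⟨ihpos, ihbar⟩ := ih hL
    rw [multiDeriv, multiShift]
    set d := multiDeriv G L c
    set x := multiShift G (-δ) L a
    have hst : ∀ U, IsPartialTransversal G L U → Stable (pd U d) :=
      fun U hU => stable_pd_multiDeriv hG hne hc hL hU
    have hbarU : ∀ k ∈ G i, ∀ U, IsPartialTransversal G L U → k ∉ U →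
        ev (pd {k} (pd U d)) x ≤ u * ev (pd U d) x := by
      intro k hk U hU hkU
      induction U using Finset.induction_on with
      | empty =>
        rw [pd_empty]
        refine ihbar k fun j hj hkj => ?_
        exact disjoint_left.1 (disjoint_of_subset_group hG hi subset_rfl j hj) hk hkj
      | insert l U hl ihU =>
        rw [mem_insert, not_or] at hkU
        have hU' := hU.mono (subset_insert l U)
        have h1 := ihU hU' hkU.2
        have h2 := (hst U hU').rayleigh k l x
        have h3 := ihpos _ hU'
        have h4 := ihpos _ hU
        rw [insert_eq, ← pd_pd (disjoint_singleton_left.2 hl)] at h4 ⊢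
        refine le_of_mul_le_mul_left ?_ h3
        have := mul_le_mul_of_nonneg_right h1 h4.le
        linarith
    have key : ∀ U, IsPartialTransversal G L U → Disjoint U (G i) →
        0 < ev (groupDeriv (G i) (pd U d)) (shift (G i) (-δ) x) ∧
        ∀ l v, ev (pd {l} (pd U d)) x ≤ v * ev (pd U d) x →
          ev (groupDeriv (G i) (pd {l} (pd U d))) (shift (G i) (-δ) x) ≤
            v * ev (groupDeriv (G i) (pd U d)) (shift (G i) (-δ) x) := by
      intro U hU hUG
      refine (hst U hU).barrier_shift (hne i) (fun T hT => ?_) hu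
        (fun k hk => hbarU k hk U hU (disjoint_right.1 hUG hk)) (hδ i)
      rw [pd_pd (hUG.symm.mono_left hT), union_comm]
      exact ihpos _ (hU.union (disjoint_of_subset_group hG hi hT))
    refine ⟨fun U hU => ?_, fun l hl => ?_⟩
    · rcases hU.disjoint_or_exists with h | ⟨k, h⟩
      · rw [pd_groupDeriv_of_disjoint h]
        exact (key U hU.tail h).1
      · rw [pd_groupDeriv_of_inter_eq_singleton h, ev_pd_shift subset_union_right]
        exact ihpos _ (hU.tail.union (disjoint_of_subset_group hG hi subset_rfl))
    · have h1 := (key ∅ isPartialTransversal_empty (disjoint_empty_left _)).2 l u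
      rw [pd_empty] at h1
      rw [pd_groupDeriv_of_disjoint (disjoint_singleton_left.2 (hl i List.mem_cons_self))]
      exact h1 (ihbar l fun j hj => hl j (List.mem_cons_of_mem _ hj))

lemma exists_pd_pos_of_multiDeriv (hG : Pairwise (Function.onFun Disjoint G))
    (hne : ∀ i, (G i).Nonempty) (hc : ∀ U, Stable (pd U c)) {x : N → ℝ} {L : List ι}
    (hL : L.Nodup) {W : Finset N} (hW : ∀ i ∈ L, Disjoint W (G i))
    (hpos : ∀ U, IsPartialTransversal G L U → Disjoint W U →
      0 < ev (pd (W ∪ U) (multiDeriv G L c)) x) :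
    ∃ D : Finset N, (∀ i ∈ L, ∃ k ∈ G i, ∀ j ∈ G i, j ∈ D ↔ j ≠ k) ∧
      (∀ j, (∀ i ∈ L, j ∉ G i) → (j ∈ D ↔ j ∈ W)) ∧
      ∀ U, Disjoint D U → 0 < ev (pd (D ∪ U) c) x := by
  induction L generalizing W with
  | nil => exact ⟨W, by simp, by simp, fun U hU => hpos U (by simp [IsPartialTransversal]) hU⟩
  | cons i L ih =>
    obtain ⟨hi, hL⟩ := List.nodup_cons.1 hL
    have hWi := hW i List.mem_cons_self
    set d := multiDeriv G L c
    have hGi := fun V hV => disjoint_of_subset_group (V := V) hG hi hV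
    obtain ⟨k, hk, hk0⟩ : ∃ k ∈ G i, 0 < ev (pd (W ∪ (G i).erase k) d) x := by
      have h := hpos ∅ isPartialTransversal_empty (disjoint_empty_right _)
      rw [union_empty, multiDeriv, groupDeriv, pd_sum, ev_sum] at h
      obtain ⟨k, hk, h⟩ := Finset.exists_lt_of_sum_lt (f := fun _ => (0 : ℝ)) (by simpa using h)
      rw [pd_pd (hWi.mono_right (erase_subset _ _))] at h
      exact ⟨k, hk, h⟩
    set V := W ∪ (G i).erase k with hV
    have hVL : ∀ j ∈ L, Disjoint V (G j) := fun j hj =>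
      disjoint_union_left.2 ⟨hW j (List.mem_cons_of_mem _ hj), hGi _ (erase_subset _ _) j hj⟩
    have hkV : k ∉ V := by
      rw [hV, mem_union, not_or]
      exact ⟨disjoint_right.1 hWi hk, notMem_erase k _⟩
    have hmem : ∀ U, IsPartialTransversal G L U → Disjoint V U → k ∈ U →
        0 < ev (pd (V ∪ U) d) x := by
      intro U hU hVU hkU
      have hUG : U ∩ G i = {k} := by
        ext j
        rw [mem_inter, mem_singleton]
        refine ⟨fun hj => ?_, fun hj => hj ▸ ⟨hkU, hk⟩⟩
        by_contra hjk
        exact disjoint_right.1 hVU hj.1 (mem_union_right _ (mem_erase.2 ⟨hjk, hj.2⟩))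
      have hU' : IsPartialTransversal G (i :: L) U := by
        intro j hj
        rcases List.mem_cons.1 hj with rfl | hj
        · rw [hUG, card_singleton]
        · exact hU j hj
      have h := hpos U hU' (hVU.mono_left subset_union_left)
      rw [multiDeriv, pd_groupDeriv_of_inter_eq_singleton (k := k)] at h
      · convert h using 3
        ext j
        simp only [hV, mem_union, mem_erase]
        by_cases hjk : j = k
        · subst hjk; simp [hkU]
        · simp [hjk]; tauto
      · rw [union_inter_distrib_right, disjoint_iff_inter_eq_empty.1 hWi, hUG, empty_union]
    have hall : ∀ U, IsPartialTransversal G L U → Disjoint V U → 0 < ev (pd (V ∪ U) d) x := by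
      intro U hU hVU
      by_cases hkU : k ∈ U
      · exact hmem U hU hVU hkU
      induction U using Finset.induction_on with
      | empty => rwa [union_empty]
      | insert l U hl ihU =>
        rw [mem_insert, not_or] at hkU
        have hU' := hU.mono (subset_insert l U)
        rw [disjoint_insert_right] at hVU
        have hlVU : l ∉ V ∪ U := by simp [hVU.1, hl]
        have hkVU : k ∉ insert l (V ∪ U) := by simp [hkV, hkU]
        have h1 := ihU hU' hVU.2 hkU.2
        have hst : Stable (pd (V ∪ U) d) := by
          rw [union_comm]
          exact stable_pd_multiDeriv hG hne hc hL (hU'.union hVL)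
        have hkL : ∀ j ∈ L, Disjoint {k} (G j) := hGi _ (singleton_subset_iff.2 hk)
        have h2 := hmem (U ∪ {k}) (hU'.union hkL)
          (disjoint_union_right.2 ⟨hVU.2, disjoint_singleton_right.2 hkV⟩) (by simp)
        have h3 := hmem (insert l U ∪ {k}) (hU.union hkL)
          (disjoint_union_right.2 ⟨disjoint_insert_right.2 hVU, disjoint_singleton_right.2 hkV⟩)
          (by simp)
        have h4 := hst.rayleigh k l x
        rw [pd_pd (disjoint_singleton_left.2 hlVU), ← insert_eq,
          pd_pd (disjoint_singleton_left.2 hkVU),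
          pd_pd (disjoint_singleton_left.2 fun h => hkVU (mem_insert_of_mem h))] at h4
        rw [← union_assoc, union_comm _ {k}] at h2 h3
        rw [union_insert] at h3 ⊢
        exact pos_of_mul_pos_right ((mul_pos h1 h3).trans_le h4) h2.le
    obtain ⟨D, hD1, hD2, hD3⟩ := ih hL hVL hall
    refine ⟨D, fun j hj => ?_, fun j hj => ?_, hD3⟩
    · rcases List.mem_cons.1 hj with rfl | hj
      · refine ⟨k, hk, fun l hl => ?_⟩
        rw [hD2 l fun i' hi' => disjoint_left.1 (hGi _ subset_rfl i' hi') hl, hV, mem_union,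
          mem_erase]
        simp [hl, disjoint_right.1 hWi hl]
      · exact hD1 j hj
    · rw [hD2 j fun i' hi' => hj i' (List.mem_cons_of_mem _ hi'), hV, mem_union, mem_erase]
      simp [hj i List.mem_cons_self]

omit [Fintype N] in
lemma multiShift_of_mem (hG : Pairwise (Function.onFun Disjoint G)) (t : ℝ) {L : List ι}
    (hL : L.Nodup) (a : N → ℝ) {i : ι} (hi : i ∈ L) {k : N} (hk : k ∈ G i) :
    multiShift G t L a k = a k + t := by
  have hnot : ∀ {L : List ι}, (∀ j ∈ L, k ∉ G j) → multiShift G t L a k = a k := by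
    intro L hL
    induction L with
    | nil => rfl
    | cons j L ih =>
      simp [multiShift, shift, hL j List.mem_cons_self,
        ih fun j hj => hL j (List.mem_cons_of_mem _ hj)]
  induction L with
  | nil => simp at hi
  | cons j L ih =>
    obtain ⟨hj, hL⟩ := List.nodup_cons.1 hL
    by_cases hkj : k ∈ G j
    · simp [multiShift, shift, hkj, hnot fun j' hj' =>
        disjoint_left.1 (disjoint_of_subset_group hG hj subset_rfl j' hj') hkj]
    · rcases List.mem_cons.1 hi with rfl | hi
      · exact absurd hk hkj
      · simp [multiShift, shift, hkj, ih hL hi]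

/-- Given a stable multiaffine polynomial whose variables are divided into groups, with small
barrier functions at a point above its roots, one can select one variable in each group such that
the derivative with respect to all the other variables has a better root bound. -/
theorem exists_selection [Fintype ι] (hG : Pairwise (Function.onFun Disjoint G))
    (hne : ∀ i, (G i).Nonempty) (hcov : ∀ k, ∃ i, k ∈ G i) (hc : ∀ U, Stable (pd U c))
    {a : N → ℝ} (hpos : ∀ U, 0 < ev (pd U c) a) {u δ : ℝ} (hu : 0 < u)
    (hbar : ∀ l, ev (pd {l} c) a ≤ u * ev c a)
    (hδ : ∀ i, (#(G i) : ℝ) ^ 2 * δ * u ≤ (#(G i) - 1) ^ 2) :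
    ∃ D : Finset N, (∀ i, ∃ k ∈ G i, ∀ j ∈ G i, j ∈ D ↔ j ≠ k) ∧
      ∀ U, Disjoint D U → 0 < ev (pd (D ∪ U) c) fun k => a k - δ := by
  have hL := Finset.nodup_toList (univ : Finset ι)
  have hx : multiShift G (-δ) (univ : Finset ι).toList a = fun k => a k - δ := by
    ext k
    obtain ⟨i, hi⟩ := hcov k
    rw [multiShift_of_mem hG _ hL a (by simp) hi, sub_eq_add_neg]
  have h := (multiDeriv_barrier hG hne hc hpos hu hbar hδ hL).1
  rw [hx] at h
  obtain ⟨D, hD1, -, hD3⟩ := exists_pd_pos_of_multiDeriv hG hne hc hL (W := ∅) (by simp)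
    fun U hU _ => by simpa using h U hU
  exact ⟨D, fun i => hD1 i (by simp), hD3⟩

end Multiaffine

namespace Matrix

open Finset

lemma IsHermitian.det_diagonal_sub_ne_zero {m : Type*} [Fintype m] [DecidableEq m]
    {B : Matrix m m ℂ} (hB : B.IsHermitian) {z : m → ℂ} (hz : ∀ i, 0 < (z i).im) :
    (diagonal z - B).det ≠ 0 := by
  intro h
  obtain ⟨v, hv, hv0⟩ := exists_mulVec_eq_zero_iff.2 h
  have h1 : (star v ⬝ᵥ (diagonal z *ᵥ v)).im = 0 := by
    rw [sub_mulVec, sub_eq_zero] at hv0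
    rw [hv0]
    exact hB.im_star_dotProduct_mulVec_self v
  have h2 : (star v ⬝ᵥ (diagonal z *ᵥ v)).im = ∑ i, (z i).im * Complex.normSq (v i) := by
    rw [dotProduct, Complex.im_sum]
    refine Finset.sum_congr rfl fun i _ => ?_
    rw [mulVec_diagonal, Pi.star_apply, mul_left_comm]
    have : star (v i) * v i = (Complex.normSq (v i) : ℂ) := by
      rw [mul_comm]; exact Complex.mul_conj _
    rw [this, Complex.mul_im]
    simp
  obtain ⟨i, hi⟩ := Function.ne_iff.1 hv
  have h3 : 0 < ∑ i, (z i).im * Complex.normSq (v i) :=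
    Finset.sum_pos' (fun j _ => mul_nonneg (hz j).le (Complex.normSq_nonneg _))
      ⟨i, mem_univ i, mul_pos (hz i) (Complex.normSq_pos.2 hi)⟩
  rw [← h2, h1] at h3
  exact h3.false

variable {N : Type*} [Fintype N] [DecidableEq N]

/-- The matrix `diagonal z - B` with the rows in `U` replaced by those of the identity. -/
def rowReplace (B : Matrix N N ℂ) (U : Finset N) (z : N → ℂ) : Matrix N N ℂ :=
  of fun i => if i ∈ U then (1 : Matrix N N ℂ) i else (diagonal z - B) i

/-- The coefficients of the multiaffine polynomial `det (diagonal z - B)`. -/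
noncomputable def detCoeff (B : Matrix N N ℂ) (S : Finset N) : ℝ :=
  (rowReplace B S 0).det.re

lemma det_rowReplace (B : Matrix N N ℂ) (U : Finset N) (z : N → ℂ) :
    (rowReplace B U z).det =
      ((diagonal z - B).submatrix (Subtype.val : {i // i ∉ U} → N) Subtype.val).det := by
  rw [twoBlockTriangular_det _ (fun i => i ∉ U)]
  · have h1 : toSquareBlockProp (rowReplace B U z) (fun i => ¬ i ∉ U) = 1 := by
      ext ⟨i, hi⟩ ⟨j, hj⟩
      simp only [not_not] at hi
      simp [toSquareBlockProp, rowReplace, hi, one_apply]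
    rw [h1, det_one, mul_one]
    congr 1
    ext ⟨i, hi⟩ ⟨j, hj⟩
    simp [toSquareBlockProp, rowReplace, hi]
  · intro i hi j hj
    have hij : i ≠ j := by rintro rfl; exact hi hj
    rw [not_not] at hi
    simp [rowReplace, hi, hij]

lemma det_rowReplace_eq_sum (B : Matrix N N ℂ) (U : Finset N) (z : N → ℂ) :
    (rowReplace B U z).det = ∑ S, if Disjoint S U then
      (rowReplace B (S ∪ U) 0).det * ∏ i ∈ S, z i else 0 := by
  set w : N → ℂ := fun i => if i ∈ U then 0 else z i with hw
  set e : N → N → ℂ := fun i => (1 : Matrix N N ℂ) i with he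
  set R : N → N → ℂ := rowReplace B U 0 with hR
  have h1 : rowReplace B U z = (fun i => w i • e i) + R := by
    funext i j
    change rowReplace B U z i j = w i * (1 : Matrix N N ℂ) i j + rowReplace B U 0 i j
    by_cases hi : i ∈ U
    · simp [rowReplace, hw, hi]
    · simp [rowReplace, hw, hi, diagonal_apply, one_apply, sub_eq_add_neg]
  have h2 : (rowReplace B U z).det = detRowAlternating (rowReplace B U z) := rfl
  rw [h2, h1, AlternatingMap.map_add_univ]
  refine Finset.sum_congr rfl fun S _ => ?_
  have h3 : S.piecewise (fun i => w i • e i) R =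
      S.piecewise (fun i => w i • S.piecewise e R i) (S.piecewise e R) := by
    funext i
    by_cases hi : i ∈ S <;> simp [hi]
  have h4 := (detRowAlternating (R := ℂ) (n := N)).toMultilinearMap.map_piecewise_smul w
    (S.piecewise e R) S
  rw [AlternatingMap.coe_multilinearMap] at h4
  rw [h3, h4]
  split_ifs with h
  · have h5 : S.piecewise e R = rowReplace B (S ∪ U) 0 := by
      funext i
      by_cases hi : i ∈ S
      · refine (Finset.piecewise_eq_of_mem _ _ _ hi).trans (funext fun j => ?_)
        simp [he, rowReplace, hi]
      · refine (Finset.piecewise_eq_of_notMem _ _ _ hi).trans (funext fun j => ?_)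
        simp [hR, rowReplace, hi]
    rw [h5, smul_eq_mul, mul_comm]
    congr 1
    exact Finset.prod_congr rfl fun i hi => if_neg (disjoint_left.1 h hi)
  · obtain ⟨i, hi, hiU⟩ := not_disjoint_iff.1 h
    have h6 : ∏ i ∈ S, w i = 0 := Finset.prod_eq_zero hi (if_pos hiU)
    rw [h6, zero_smul]

variable {B : Matrix N N ℂ}

lemma IsHermitian.coe_detCoeff (hB : B.IsHermitian) (S : Finset N) :
    (detCoeff B S : ℂ) = (rowReplace B S 0).det := by
  have h : IsHermitian ((diagonal 0 - B).submatrix (Subtype.val : {i // i ∉ S} → N)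
      Subtype.val) := by
    refine IsHermitian.submatrix ?_ _
    simpa using hB.neg
  have h2 : star (rowReplace B S 0).det = (rowReplace B S 0).det := by
    rw [det_rowReplace, ← det_conjTranspose, h.eq]
  exact Complex.conj_eq_iff_re.1 h2

lemma IsHermitian.ev_pd_detCoeff (hB : B.IsHermitian) (U : Finset N) (z : N → ℂ) :
    Multiaffine.ev (Multiaffine.pd U (detCoeff B)) z =
      ((diagonal z - B).submatrix (Subtype.val : {i // i ∉ U} → N) Subtype.val).det := by
  rw [← det_rowReplace, det_rowReplace_eq_sum, Multiaffine.ev]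
  refine Finset.sum_congr rfl fun S _ => ?_
  by_cases h : Disjoint S U <;> simp [Multiaffine.pd, h, hB.coe_detCoeff]

lemma IsHermitian.stable_pd_detCoeff (hB : B.IsHermitian) (U : Finset N) :
    Multiaffine.Stable (Multiaffine.pd U (detCoeff B)) := by
  intro z hz
  rw [hB.ev_pd_detCoeff]
  have h : (diagonal z - B).submatrix (Subtype.val : {i // i ∉ U} → N) Subtype.val =
      diagonal (z ∘ Subtype.val) - B.submatrix Subtype.val Subtype.val := by
    rw [← submatrix_diagonal _ _ Subtype.val_injective]
    rfl
  rw [h]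
  exact (hB.submatrix _).det_diagonal_sub_ne_zero fun i => hz i

lemma IsHermitian.ev_pd_detCoeff_ofReal (hB : B.IsHermitian) (U : Finset N) (x : ℝ) :
    ((Multiaffine.ev (Multiaffine.pd U (detCoeff B)) (fun _ => x) : ℝ) : ℂ) =
      (((x : ℂ) • 1 - B).submatrix (Subtype.val : {i // i ∉ U} → N) Subtype.val).det := by
  rw [← Multiaffine.ev_ofReal, hB.ev_pd_detCoeff, smul_one_eq_diagonal]

omit [Fintype N] in
lemma posDef_smul_one_sub (hB1 : (1 - B).PosSemidef) {b : ℝ} (hb : 1 < b) :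
    ((b : ℂ) • 1 - B).PosDef := by
  have h : (b : ℂ) • 1 - B = ((b - 1 : ℝ) : ℂ) • 1 + (1 - B) := by
    push_cast; module
  rw [h]
  refine PosDef.add_posSemidef (PosDef.one.smul ?_) hB1
  exact_mod_cast sub_pos.2 hb

lemma ev_pd_detCoeff_pos (hB : B.IsHermitian) (hB1 : (1 - B).PosSemidef) {b : ℝ} (hb : 1 < b)
    (U : Finset N) : 0 < Multiaffine.ev (Multiaffine.pd U (detCoeff B)) (fun _ => b) := by
  have h := ((posDef_smul_one_sub hB1 hb).submatrix
    (Subtype.val_injective (p := fun i => i ∉ U))).det_pos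
  rw [← hB.ev_pd_detCoeff_ofReal] at h
  exact_mod_cast h

lemma PosSemidef.inv_apply_le (hB : B.PosSemidef) (hB1 : (1 - B).PosSemidef) {b : ℝ} (hb : 1 < b)
    (l : N) : b * (b - 1) * (((b : ℂ) • 1 - B)⁻¹ l l) ≤ b - 1 + B l l := by
  set H := (b : ℂ) • 1 - B with hH
  have hHp : H.PosDef := posDef_smul_one_sub hB1 hb
  have hdet : IsUnit H.det := (isUnit_iff_isUnit_det _).1 hHp.isUnit
  have h1 : ((b : ℂ) • ((1 - B) * B * (1 - B)) + ((b - 1 : ℝ) : ℂ) • (B * (1 - B) * B)).PosSemidef := by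
    have h2 := hB.mul_mul_conjTranspose_same (1 - B)
    have h3 := hB1.mul_mul_conjTranspose_same B
    rw [hB1.isHermitian.eq] at h2
    rw [hB.isHermitian.eq] at h3
    exact (h2.smul (by exact_mod_cast (zero_lt_one.trans hb).le)).add
      (h3.smul (by exact_mod_cast (sub_pos.2 hb).le))
  have h4 : (b : ℂ) • ((1 - B) * B * (1 - B)) + ((b - 1 : ℝ) : ℂ) • (B * (1 - B) * B) =
      H * (((b - 1 : ℝ) : ℂ) • 1 + B) * H - ((b * (b - 1) : ℝ) : ℂ) • H := by
    rw [hH]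
    push_cast
    simp only [mul_sub, sub_mul, mul_add, add_mul, Matrix.smul_mul, Matrix.mul_smul, one_mul, mul_one,
      mul_assoc]
    module
  rw [h4] at h1
  have h5 := h1.mul_mul_conjTranspose_same H⁻¹
  rw [hHp.inv.isHermitian.eq, mul_sub, sub_mul] at h5
  have h6 : H⁻¹ * (H * (((b - 1 : ℝ) : ℂ) • 1 + B) * H) * H⁻¹ = ((b - 1 : ℝ) : ℂ) • 1 + B := by
    rw [mul_assoc H, nonsing_inv_mul_cancel_left _ _ hdet, mul_nonsing_inv_cancel_right _ _ hdet]
  have h7 : H⁻¹ * (((b * (b - 1) : ℝ) : ℂ) • H) * H⁻¹ = ((b * (b - 1) : ℝ) : ℂ) • H⁻¹ := by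
    rw [Matrix.mul_smul, nonsing_inv_mul _ hdet, Matrix.smul_mul, one_mul]
  rw [h6, h7] at h5
  have h8 := h5.diag_nonneg (i := l)
  simp at h8
  exact h8

lemma PosSemidef.ev_pd_singleton_detCoeff_le (hB : B.PosSemidef) (hB1 : (1 - B).PosSemidef)
    {α : ℝ} (hα : ∀ i, (B i i).re ≤ α) {b : ℝ} (hb : 1 < b) (l : N) :
    Multiaffine.ev (Multiaffine.pd {l} (detCoeff B)) (fun _ => b) ≤
      (b - 1 + α) / (b * (b - 1)) * Multiaffine.ev (detCoeff B) (fun _ => b) := by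
  have hHp := posDef_smul_one_sub hB1 hb
  have hinv := hB.inv_apply_le hB1 hb l
  set H := (b : ℂ) • 1 - B with hH
  have h1 : ((Multiaffine.ev (Multiaffine.pd {l} (detCoeff B)) (fun _ => b) : ℝ) : ℂ) =
      H.adjugate l l := by
    rw [← Multiaffine.ev_ofReal, hB.isHermitian.ev_pd_detCoeff, ← det_rowReplace, adjugate_apply]
    congr 1
    ext i j
    by_cases hi : i = l
    · subst hi
      simp [rowReplace, one_apply, Pi.single_apply, eq_comm]
    · simp [rowReplace, hi, hH, smul_one_eq_diagonal]
  have h2 : ((Multiaffine.ev (detCoeff B) (fun _ => b) : ℝ) : ℂ) = H.det := by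
    have h := hB.isHermitian.ev_pd_detCoeff (∅ : Finset N) (fun _ => (b : ℂ))
    rw [← det_rowReplace, Multiaffine.pd_empty, Multiaffine.ev_ofReal] at h
    rw [h, hH, smul_one_eq_diagonal]
    congr 1
  have h3 : ((Multiaffine.ev (Multiaffine.pd {l} (detCoeff B)) (fun _ => b) : ℝ) : ℂ) =
      ((Multiaffine.ev (detCoeff B) (fun _ => b) : ℝ) : ℂ) * H⁻¹ l l := by
    rw [h1, h2, inv_def, smul_apply, smul_eq_mul, ← mul_assoc,
      Ring.mul_inverse_cancel _ ((isUnit_iff_isUnit_det _).1 hHp.isUnit), one_mul]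
  have hpos : 0 < Multiaffine.ev (detCoeff B) (fun _ => b) := by
    have := hHp.det_pos
    rw [← h2] at this
    exact_mod_cast this
  have h4 := congrArg Complex.re h3
  rw [Complex.ofReal_re, Complex.re_ofReal_mul] at h4
  rw [h4, mul_comm]
  refine mul_le_mul_of_nonneg_right ?_ hpos.le
  have h5 := (Complex.le_def.1 hinv).1
  have hb1 : 0 < b * (b - 1) := mul_pos (by linarith) (by linarith)
  rw [le_div_iff₀ hb1]
  have h6 : (b * (b - 1) * H⁻¹ l l : ℂ).re = b * (b - 1) * (H⁻¹ l l).re := by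
    rw [← Complex.re_ofReal_mul]; push_cast; rfl
  rw [h6] at h5
  simp at h5
  linarith [hα l]

end Matrix

namespace Multiaffine

open Finset

variable {N : Type*} [Fintype N] [DecidableEq N]

lemma ev_pd_pos_of_le {c : Finset N → ℝ} {D U : Finset N} (hDU : D ⊆ U) {x y : ℝ} (hxy : x ≤ y)
    (h : ∀ V, D ⊆ V → 0 < ev (pd V c) fun _ => x) : 0 < ev (pd U c) fun _ => y := by
  have h1 : (fun _ : N => y) = (fun _ => y - x) + fun _ => x := by
    funext i; simp
  rw [h1, ev_add]
  refine Finset.sum_pos' (fun T _ => ?_) ⟨∅, mem_univ _, ?_⟩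
  · refine mul_nonneg (Finset.prod_nonneg fun _ _ => sub_nonneg.2 hxy) ?_
    by_cases hT : Disjoint T U
    · rw [pd_pd hT]
      exact (h _ (hDU.trans subset_union_right)).le
    · rw [pd_pd_of_not_disjoint hT, ev_zero]
  · simpa using h U hDU

end Multiaffine

namespace Matrix

open Finset

lemma PosSemidef.blockDiagonal_const {m κ : Type*} [Fintype m] [Fintype κ] [DecidableEq κ]
    {A : Matrix m m ℂ} (hA : A.PosSemidef) :
    (blockDiagonal fun _ : κ => A).PosSemidef := by
  classical
  refine PosSemidef.of_dotProduct_mulVec_nonneg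
    (isHermitian_blockDiagonal_iff.2 fun _ => hA.isHermitian) fun x => ?_
  have h : star x ⬝ᵥ ((blockDiagonal fun _ : κ => A) *ᵥ x) =
      ∑ k, star (fun i => x (i, k)) ⬝ᵥ (A *ᵥ fun i => x (i, k)) := by
    simp [dotProduct, mulVec, blockDiagonal_apply, Fintype.sum_prod_type, Finset.sum_comm (γ := m)]
  rw [h]
  exact Finset.sum_nonneg fun k _ => hA.dotProduct_mulVec_nonneg _

lemma IsHermitian.re_le_of_isRoot_charpoly {m : Type*} [Fintype m] [DecidableEq m]
    {A : Matrix m m ℂ} (hA : A.IsHermitian) {x : ℝ}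
    (h : ∀ t : ℝ, x < t → ((t : ℂ) • 1 - A).det ≠ 0) {z : ℂ} (hz : A.charpoly.IsRoot z) :
    z.re ≤ x := by
  have hmem : z ∈ A.charpoly.roots := (Polynomial.mem_roots A.charpoly_monic.ne_zero).2 hz
  rw [hA.roots_charpoly_eq_eigenvalues] at hmem
  obtain ⟨i, -, rfl⟩ := Multiset.mem_map.1 hmem
  by_contra! hlt
  refine h _ hlt ?_
  rw [Polynomial.IsRoot, eval_charpoly, scalar_apply, ← smul_one_eq_diagonal] at hz
  simpa using hz

lemma PosSemidef.exists_coloring {m κ : Type*} [Fintype m] [DecidableEq m] [Fintype κ]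
    [DecidableEq κ] [Nonempty κ] {A : Matrix m m ℂ} (hA : A.PosSemidef)
    (hA1 : (1 - A).PosSemidef) {α : ℝ} (hα : 0 ≤ α) (hdiag : ∀ i, (A i i).re ≤ α)
    {b : ℝ} (hb : 1 < b) :
    ∃ σ : m → κ, ∀ k, ∀ t : ℝ,
      b - (1 - 1 / Fintype.card κ) ^ 2 / ((b - 1 + α) / (b * (b - 1))) < t →
      (((t : ℂ) • 1 - A).submatrix (Subtype.val : {i // σ i = k} → m) Subtype.val).det ≠ 0 := by
  set B : Matrix (m × κ) (m × κ) ℂ := blockDiagonal fun _ : κ => A with hBdef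
  have hB : B.PosSemidef := hA.blockDiagonal_const
  have hB1 : (1 - B).PosSemidef := by
    have h : 1 - B = blockDiagonal fun _ : κ => 1 - A := by
      rw [hBdef, ← blockDiagonal_one, ← blockDiagonal_sub]
      rfl
    rw [h]
    exact hA1.blockDiagonal_const
  have hBd : ∀ p, (B p p).re ≤ α := fun p => by
    simpa [hBdef, blockDiagonal_apply] using hdiag p.1
  set u := (b - 1 + α) / (b * (b - 1)) with hu
  have hu0 : 0 < u := div_pos (by linarith) (mul_pos (by linarith) (by linarith))
  have hr : (0 : ℝ) < Fintype.card κ := by exact_mod_cast Fintype.card_pos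
  set δ := (1 - 1 / (Fintype.card κ : ℝ)) ^ 2 / u with hδ
  have hcard : ∀ i : m, #(({i} : Finset m) ×ˢ (univ : Finset κ)) = Fintype.card κ := fun i => by
    simp
  obtain ⟨D, hD, hpos⟩ := Multiaffine.exists_selection (N := m × κ) (ι := m)
    (G := fun i => {i} ×ˢ univ) (c := detCoeff B) (a := fun _ => b) (u := u) (δ := δ)
    (fun i j hij => disjoint_product.2 (.inl (disjoint_singleton.2 hij)))
    (fun i => by simp)
    (fun p => ⟨p.1, by simp⟩)
    hB.isHermitian.stable_pd_detCoeff (ev_pd_detCoeff_pos hB.isHermitian hB1 hb) hu0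
    (hB.ev_pd_singleton_detCoeff_le hB1 hBd hb)
    (fun i => by
      rw [hcard, hδ]
      apply le_of_eq
      field_simp)
  have hσ : ∀ i, ∃ k : κ, ∀ l, (i, l) ∈ D ↔ l ≠ k := fun i => by
    obtain ⟨⟨i', k⟩, hk, h⟩ := hD i
    obtain rfl : i = i' := by simpa using hk
    exact ⟨k, fun l => by simpa using h (i, l) (by simp)⟩
  choose σ hσ using hσ
  refine ⟨σ, fun k t ht => ?_⟩
  set U : Finset (m × κ) := univ.filter fun p => ¬ (p.2 = k ∧ σ p.1 = k) with hU
  have hDU : D ⊆ U := by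
    rintro ⟨i, l⟩ hp
    have := (hσ i l).1 hp
    simp only [hU, mem_filter, mem_univ, true_and]
    rintro ⟨rfl, h⟩
    exact this h.symm
  have h1 := Multiaffine.ev_pd_pos_of_le hDU ht.le fun V hV => by
    simpa [union_sdiff_of_subset hV] using hpos (V \ D) disjoint_sdiff
  have h2 := hB.isHermitian.ev_pd_detCoeff_ofReal U t
  let e : {i // σ i = k} ≃ {p // p ∉ U} :=
    { toFun := fun i => ⟨(i.1, k), by simp [hU, i.2]⟩
      invFun := fun p => ⟨p.1.1, by
        have := p.2
        simp only [hU, mem_filter, mem_univ, true_and, not_not] at this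
        exact this.2⟩
      left_inv := fun i => rfl
      right_inv := fun p => by
        have := p.2
        simp only [hU, mem_filter, mem_univ, true_and, not_not] at this
        exact Subtype.ext (Prod.ext rfl this.1.symm) }
  have h3 : ((t : ℂ) • 1 - A).submatrix (Subtype.val : {i // σ i = k} → m) Subtype.val =
      (((t : ℂ) • 1 - B).submatrix (Subtype.val : {p // p ∉ U} → m × κ) Subtype.val).submatrix
        e e := by
    ext i j
    simp [e, hBdef, blockDiagonal_apply, one_apply]
  rw [h3, det_submatrix_equiv_self, ← h2]
  exact_mod_cast h1.ne'

end Matrix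

lemma barrier_bound {s α : ℝ} (hs : 0 < s) (hs2 : 2 ≤ s ^ 4) (hα : 0 ≤ α) :
    (1 + s) - (1 - 1 / s ^ 4) ^ 2 / ((1 + s - 1 + α) / ((1 + s) * (1 + s - 1))) ≤ 4 / s + α := by
  have h1 : 1.18 < s := by
    by_contra! h
    have : s ^ 4 ≤ 1.18 ^ 4 := by gcongr
    norm_num at this
    linarith
  have hsα : 0 < s + α := by linarith
  have h2 : (1 + s) - (1 - 1 / s ^ 4) ^ 2 / ((1 + s - 1 + α) / ((1 + s) * (1 + s - 1))) =
      α + α * (1 - α) / (s + α) + (2 - 1 / s ^ 4) * (1 + s) / (s ^ 3 * (s + α)) := by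
    have : 1 + s - 1 + α ≠ 0 := by linarith
    have h' : 1 + s - 1 ≠ 0 := by linarith
    field_simp
    ring
  have h3 : α * (1 - α) / (s + α) ≤ 1 / s := by
    rw [div_le_div_iff₀ hsα hs]
    nlinarith [mul_nonneg hα (mul_nonneg hα hs.le), mul_nonneg hα hs.le, sq_nonneg (α - 1 / 2)]
  have h4 : (2 - 1 / s ^ 4) * (1 + s) / (s ^ 3 * (s + α)) ≤ 3 / s := by
    have h5 : 0 ≤ 1 / s ^ 4 := by positivity
    calc (2 - 1 / s ^ 4) * (1 + s) / (s ^ 3 * (s + α)) ≤ 2 * (1 + s) / (s ^ 3 * s) := by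
          gcongr <;> linarith
      _ ≤ 3 / s := by
          rw [div_le_div_iff₀ (by positivity) hs]
          nlinarith [mul_pos hs hs, mul_pos (mul_pos hs hs) hs,
            mul_pos (mul_pos hs hs) (sub_pos.2 h1), mul_pos hs (sub_pos.2 h1)]
  have h6 : 4 / s = 1 / s + 3 / s := by ring
  linarith

lemma re_le_of_isRoot_charpoly_subMat {n : ℕ} {A : Matrix (Fin n) (Fin n) ℂ} (hA : A.IsHermitian)
    (S : Finset (Fin n)) {x : ℝ}
    (h : ∀ t : ℝ, x < t →
      (((t : ℂ) • 1 - A).submatrix (Subtype.val : {i // i ∈ S} → Fin n) Subtype.val).det ≠ 0)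
    {z : ℂ} (hz : (subMat A S).charpoly.IsRoot z) : z.re ≤ x := by
  refine (hA.submatrix _).re_le_of_isRoot_charpoly (fun t ht => ?_) hz
  rw [← Matrix.submatrix_one _ (Subtype.val_injective (p := fun i => i ∈ S))]
  exact h t ht

/-- **Paving bound.** Every PSD contraction with diagonal entries at most `α` has an
`r`-paving all of whose blocks have largest eigenvalue at most `4·r^{-1/4} + α`. -/
theorem paving_bound {n : ℕ} (A : Matrix (Fin n) (Fin n) ℂ)
    (hA : A.PosSemidef) (hAc : (1 - A).PosSemidef)
    (α : ℝ) (hα : 0 ≤ α) (hdiag : ∀ i, (A i i).re ≤ α)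
    (r : ℕ) (hr : 1 ≤ r) :
    ∃ S : Fin r → Finset (Fin n),
      (∀ k l, k ≠ l → Disjoint (S k) (S l)) ∧
      (∀ i : Fin n, ∃ k, i ∈ S k) ∧
      ∀ k, ∀ z : ℂ, ((subMat A (S k)).charpoly).IsRoot z →
        z.re ≤ 4 * (r : ℝ) ^ (-(1 : ℝ) / 4) + α := by
  suffices h : ∃ σ : Fin n → Fin r, ∀ k, ∀ t : ℝ, 4 * (r : ℝ) ^ (-(1 : ℝ) / 4) + α < t →
      (((t : ℂ) • 1 - A).submatrix (Subtype.val : {i // σ i = k} → Fin n) Subtype.val).det ≠ 0 by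
    obtain ⟨σ, hσ⟩ := h
    refine ⟨fun k => Finset.univ.filter fun i => σ i = k, fun k l hkl => ?_,
      fun i => ⟨σ i, by simp⟩, fun k z hz => ?_⟩
    · refine Finset.disjoint_filter.2 fun i _ h1 h2 => hkl (h1.symm.trans h2)
    · refine re_le_of_isRoot_charpoly_subMat hA.isHermitian _ (fun t ht => ?_) hz
      have h1 := hσ k t ht
      rw [← Matrix.det_submatrix_equiv_self (Equiv.subtypeEquivRight fun i =>
        (by simp : i ∈ Finset.univ.filter (fun i => σ i = k) ↔ σ i = k))] at h1
      exact h1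
  have : NeZero r := ⟨by omega⟩
  rcases hr.eq_or_lt with rfl | hr2
  · refine ⟨fun _ => 0, fun k t ht => ?_⟩
    refine ((Matrix.posDef_smul_one_sub hAc ?_).submatrix Subtype.val_injective).det_pos.ne'
    norm_num at ht
    linarith
  · set s : ℝ := (r : ℝ) ^ ((1 : ℝ) / 4) with hs
    have hr0 : (0 : ℝ) < r := by exact_mod_cast hr
    have hs0 : 0 < s := Real.rpow_pos_of_pos hr0 _
    have hs4 : s ^ 4 = r := by
      rw [hs, ← Real.rpow_natCast, ← Real.rpow_mul hr0.le]
      norm_num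
    have hs1 : 4 * (r : ℝ) ^ (-(1 : ℝ) / 4) = 4 / s := by
      rw [neg_div, Real.rpow_neg hr0.le, ← hs, div_eq_mul_inv 4 s]
    obtain ⟨σ, hσ⟩ := hA.exists_coloring (κ := Fin r) hAc hα hdiag
      (b := 1 + s) (by linarith)
    refine ⟨σ, fun k t ht => hσ k t (lt_of_le_of_lt ?_ ht)⟩
    rw [hs1, Fintype.card_fin, ← hs4]
    exact barrier_bound hs0 (by rw [hs4]; exact_mod_cast hr2) hα
end

section
/- Let r ≥ 2 and m, n ≥ 1 be integers, and let A_1,…,A_m ∈ M_n(ℂ) be positive semidefinite matrices with A_1 + ⋯ + A_m = I_n and Trace(A_i) ≤ ε for every i ∈ [m], where 0 < ε ≤ (1 − 1/√r)². Define the univariate polynomial p(x) = [ ∏_{i=1}^{m} (1 − ∂/∂z_i) ] det( z_1 A_1 + ⋯ + z_m A_m )^{r} evaluated at z_1 = ⋯ = z_m = x. Then p(x) ≠ 0 for every real x ≥ (1 + √(2r)·ε^{1/4})²; in particular every real root of p is strictly less than (1 + √(2r)·ε^{1/4})². -/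
open ComplexOrder

/-- the matrix `z₁A₁ + ⋯ + z_mA_m` with polynomial entries -/
noncomputable def mixedMat {m n : ℕ} (A : Fin m → Matrix (Fin n) (Fin n) ℂ) :
    Matrix (Fin n) (Fin n) (MvPolynomial (Fin m) ℂ) :=
  ∑ i : Fin m, (MvPolynomial.X i : MvPolynomial (Fin m) ℂ) • (A i).map (MvPolynomial.C : ℂ →+* MvPolynomial (Fin m) ℂ)

/-- `[∏ᵢ (1 - ∂/∂zᵢ)] det(z₁A₁+⋯+z_mA_m)^r` -/
noncomputable def mixedCharMv {m n : ℕ} (A : Fin m → Matrix (Fin n) (Fin n) ℂ) (r : ℕ) :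
    MvPolynomial (Fin m) ℂ :=
  (List.finRange m).foldr (fun i g => g - MvPolynomial.pderiv i g) ((mixedMat A).det ^ r)

theorem mul_sin_nonneg_of_im_div_pow_nonpos {h : ℂ → ℂ} {x₀ w : ℝ} {k : ℕ}
    (hc : ContinuousAt h x₀) (hw : h x₀ = w)
    (him : ∀ z : ℂ, 0 < z.im → (h z / (z - x₀) ^ k).im ≤ 0) {θ : ℝ}
    (h0 : 0 < θ) (hπ : θ < Real.pi) : 0 ≤ w * Real.sin (k * θ) := by
  set e : ℂ := Complex.exp (θ * Complex.I) with he
  have hgim : 0 < e.im := by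
    rw [he, Complex.exp_ofReal_mul_I_im]; exact Real.sin_pos_of_pos_of_lt_pi h0 hπ
  have hpath : Filter.Tendsto (fun ρ : ℝ => (x₀ : ℂ) + ρ * e) (nhdsWithin 0 (Set.Ioi 0))
      (nhds (x₀ : ℂ)) := by
    have : Continuous (fun ρ : ℝ => (x₀ : ℂ) + ρ * e) := by fun_prop
    have h2 := this.tendsto 0
    simp only [Complex.ofReal_zero, zero_mul, add_zero] at h2
    exact h2.mono_left nhdsWithin_le_nhds
  have hlim : Filter.Tendsto (fun ρ : ℝ => (h ((x₀ : ℂ) + ρ * e) / e ^ k).im)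
      (nhdsWithin 0 (Set.Ioi 0)) (nhds (((w : ℂ) / e ^ k).im)) := by
    rw [← hw]
    exact (Complex.continuous_im.tendsto _).comp ((hc.tendsto.comp hpath).div_const _)
  have hle : ((w : ℂ) / e ^ k).im ≤ 0 := by
    refine le_of_tendsto hlim ?_
    filter_upwards [self_mem_nhdsWithin] with ρ hρ
    have hρ : 0 < ρ := hρ
    have h1 := him ((x₀ : ℂ) + ρ * e) (by simpa using mul_pos hρ hgim)
    have h2 : h ((x₀ : ℂ) + ρ * e) / ((x₀ : ℂ) + ρ * e - x₀) ^ k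
        = ((ρ ^ k)⁻¹ : ℝ) * (h ((x₀ : ℂ) + ρ * e) / e ^ k) := by
      have : (ρ : ℂ) ≠ 0 := by exact_mod_cast hρ.ne'
      have : e ≠ 0 := Complex.exp_ne_zero _
      push_cast
      rw [add_sub_cancel_left, mul_pow]
      field_simp
    rw [h2, Complex.im_ofReal_mul] at h1
    exact nonpos_of_mul_nonpos_right h1 (by positivity)
  have h3 : (w : ℂ) / e ^ k = w * Complex.exp (((-(k * θ) : ℝ) : ℂ) * Complex.I) := by
    rw [he, ← Complex.exp_nat_mul, div_eq_mul_inv, ← Complex.exp_neg]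
    congr 2
    push_cast
    ring
  rw [h3, Complex.im_ofReal_mul, Complex.exp_ofReal_mul_I_im, Real.sin_neg] at hle
  linarith

theorem exponent_le_one_of_im_div_pow_nonpos {h : ℂ → ℂ} {x₀ w : ℝ} {k : ℕ}
    (hc : ContinuousAt h x₀) (hw : h x₀ = w) (hw0 : w ≠ 0)
    (him : ∀ z : ℂ, 0 < z.im → (h z / (z - x₀) ^ k).im ≤ 0) :
    k ≤ 1 ∧ (k = 1 → 0 < w) := by
  have hpi := Real.pi_pos
  refine ⟨?_, ?_⟩
  · by_contra! hk
    have hk' : (2 : ℝ) ≤ k := by exact_mod_cast hk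
    have h1 := mul_sin_nonneg_of_im_div_pow_nonpos (θ := Real.pi / 2 / k) hc hw him
      (by positivity) (by rw [div_lt_iff₀ (by linarith)]; nlinarith)
    have h2 := mul_sin_nonneg_of_im_div_pow_nonpos (θ := (Real.pi / 2 + Real.pi) / k) hc hw him
      (by positivity) (by rw [div_lt_iff₀ (by linarith)]; nlinarith)
    rw [mul_div_cancel₀ _ (by linarith), Real.sin_pi_div_two] at h1
    rw [mul_div_cancel₀ _ (by linarith), Real.sin_add_pi, Real.sin_pi_div_two] at h2
    exact hw0 (by linarith)
  · rintro rfl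
    have h1 := mul_sin_nonneg_of_im_div_pow_nonpos (θ := Real.pi / 2) hc hw him
      (by positivity) (by linarith)
    rw [Nat.cast_one, one_mul, Real.sin_pi_div_two, mul_one] at h1
    exact lt_of_le_of_ne h1 hw0.symm

open Polynomial

theorem aeval_conj_eq (F : ℝ[X]) (z : ℂ) :
    aeval (starRingEnd ℂ z) F = starRingEnd ℂ (aeval z F) := by
  exact aeval_algHom_apply Complex.conjAe.toAlgHom z F

theorem aeval_ofReal_eq (F : ℝ[X]) (x : ℝ) : aeval (x : ℂ) F = ((F.eval x : ℝ) : ℂ) := by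
  simpa using aeval_algebraMap_apply ℂ x F

theorem splits_of_aeval_ne_zero_of_im_pos {F : ℝ[X]}
    (hF : ∀ z : ℂ, 0 < z.im → aeval z F ≠ 0) : F.Splits := by
  have hF0 : F ≠ 0 := by rintro rfl; exact hF Complex.I (by simp) (by simp)
  refine Splits.of_splits_map (algebraMap ℝ ℂ) (IsAlgClosed.splits _) fun z hz => ?_
  have hz : aeval z F = 0 := by
    rw [mem_roots_map hF0] at hz
    exact hz
  have him : z.im = 0 := by
    rcases lt_trichotomy z.im 0 with h | h | h
    · exact absurd (by rw [aeval_conj_eq, hz, map_zero]) (hF (starRingEnd ℂ z) (by simpa using h))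
    · exact h
    · exact absurd hz (hF z h)
  exact ⟨z.re, by apply Complex.ext <;> simp [him]⟩

theorem exists_eq_X_sub_C_mul_of_im_div_nonpos {F G : ℝ[X]}
    (hF : ∀ z : ℂ, 0 < z.im → aeval z F ≠ 0)
    (him : ∀ z : ℂ, 0 < z.im → (aeval z G / aeval z F).im ≤ 0)
    {x : ℝ} (hFx : F.eval x = 0) (hGx : G.eval x ≠ 0) :
    ∃ q : ℝ[X], F = (X - C x) * q ∧ q.eval x ≠ 0 ∧ 0 < G.eval x / q.eval x := by
  have hF0 : F ≠ 0 := by rintro rfl; exact hF Complex.I (by simp) (by simp)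
  obtain ⟨q, hq, hndvd⟩ := exists_eq_pow_rootMultiplicity_mul_and_not_dvd F hF0 x
  have hqx : q.eval x ≠ 0 := fun h => hndvd (dvd_iff_isRoot.2 h)
  have hqx' : aeval (x : ℂ) q ≠ 0 := by rw [aeval_ofReal_eq]; exact_mod_cast hqx
  have hpos : 0 < F.rootMultiplicity x := (rootMultiplicity_pos hF0).2 hFx
  set k := F.rootMultiplicity x
  have key := exponent_le_one_of_im_div_pow_nonpos (h := fun z => aeval z G / aeval z q)
    (x₀ := x) (w := G.eval x / q.eval x) (k := k)
    (ContinuousAt.div (Polynomial.continuous_aeval G).continuousAt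
      (Polynomial.continuous_aeval q).continuousAt hqx')
    (by simp only [aeval_ofReal_eq, Complex.ofReal_div]) (div_ne_zero hGx hqx) (by
      intro z hz
      have := him z hz
      rw [hq] at this
      convert this using 2
      simp [div_div, mul_comm])
  have hk : k = 1 := by omega
  rw [hk, pow_one] at hq
  exact ⟨q, hq, hqx, key.2 hk⟩

theorem exists_partialFraction_of_isCoprime {F G : ℝ[X]} (hco : IsCoprime F G)
    (hF : ∀ z : ℂ, 0 < z.im → aeval z F ≠ 0)
    (him : ∀ z : ℂ, 0 < z.im → (aeval z G / aeval z F).im ≤ 0) :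
    ∃ (b c : ℝ) (s : Finset ℝ) (w : ℝ → ℝ), 0 ≤ b ∧ (∀ x ∈ s, 0 ≤ w x ∧ F.eval x = 0) ∧
      ∀ z : ℂ, aeval z F ≠ 0 →
        aeval z G / aeval z F = c - b * z + ∑ x ∈ s, (w x : ℂ) / (z - x) := by
  have hF0 : F ≠ 0 := by rintro rfl; exact hF Complex.I (by simp) (by simp)
  have hGne : ∀ x, F.eval x = 0 → G.eval x ≠ 0 := by
    intro x hx hG
    obtain ⟨u, v, huv⟩ := hco
    have := congrArg (eval x) huv
    simp [hx, hG] at this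
  have hsimple := fun x hx =>
    exists_eq_X_sub_C_mul_of_im_div_nonpos hF him (x := x) hx (hGne x hx)
  have hmem : ∀ x, x ∈ F.roots.toFinset ↔ F.eval x = 0 := by
    intro x; simp [hF0]
  have hnodup : F.roots.Nodup := by
    rw [Multiset.nodup_iff_count_le_one]
    intro x
    rw [count_roots]
    by_contra! hlt
    have hx : F.eval x = 0 := (rootMultiplicity_pos hF0).1 (by omega)
    obtain ⟨q, hq, hqx, -⟩ := hsimple x hx
    have : (X - C x) ^ 2 ∣ F := (le_rootMultiplicity_iff hF0).1 hlt
    rw [hq, pow_two] at this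
    exact hqx (dvd_iff_isRoot.1 ((mul_dvd_mul_iff_left (X_sub_C_ne_zero x)).1 this))
  set s := F.roots.toFinset with hs
  set N : ℝ[X] := Lagrange.nodal s id with hN
  have hFN : F = C F.leadingCoeff * N := by
    conv_lhs => rw [(splits_of_aeval_ne_zero_of_im_pos hF).eq_prod_roots]
    congr 1
    rw [hN, Lagrange.nodal_eq, Finset.prod, hs, Multiset.toFinset_val, hnodup.dedup]
    rfl
  have hlc : F.leadingCoeff ≠ 0 := leadingCoeff_ne_zero.2 hF0
  set R := G %ₘ N
  set Q := G /ₘ N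
  have hNm : N.Monic := Lagrange.nodal_monic
  have hdiv : R + N * Q = G := modByMonic_add_div G N
  have hRdeg : R.degree < s.card := by
    have := degree_modByMonic_lt G hNm
    rwa [hN, Lagrange.degree_nodal] at this
  have hRx : ∀ x ∈ s, R.eval x = G.eval x := by
    intro x hx
    rw [← hdiv]
    have : N.eval x = 0 := Lagrange.eval_nodal_at_node (v := id) hx
    simp [this]
  set w : ℝ → ℝ := fun x => Lagrange.nodalWeight s id x * R.eval x / F.leadingCoeff with hw
  have hwpos : ∀ x ∈ s, 0 < w x := by
    intro x hx
    obtain ⟨q, hq, hqx, hpos⟩ := hsimple x ((hmem x).1 hx)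
    have : q = C F.leadingCoeff * Lagrange.nodal (s.erase x) id := by
      apply mul_left_cancel₀ (X_sub_C_ne_zero x)
      rw [← hq]
      conv_lhs => rw [hFN, hN, Lagrange.nodal_eq_mul_nodal_erase hx]
      simp only [id]
      ring
    rw [← hRx x hx, this] at hpos
    convert hpos using 1
    rw [hw]
    simp only [Lagrange.nodalWeight_eq_eval_nodal_erase_inv, eval_mul, eval_C, id]
    rw [mul_comm (F.leadingCoeff), ← div_div, div_eq_mul_inv (R.eval x), mul_comm (R.eval x)]
  have hRN : ∀ z : ℂ, aeval z F ≠ 0 →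
      aeval z R / aeval z F = ∑ x ∈ s, (w x : ℂ) / (z - x) := by
    intro z hz
    have hzx : ∀ x ∈ s, z ≠ (x : ℂ) := by
      rintro x hx rfl
      rw [aeval_ofReal_eq, (hmem x).1 hx] at hz
      simp at hz
    have hR : R.map (algebraMap ℝ ℂ)
        = Lagrange.interpolate s (fun x : ℝ => (x : ℂ)) fun x => ((R.eval x : ℝ) : ℂ) := by
      refine Lagrange.eq_interpolate_of_eval_eq _ (Complex.ofReal_injective.injOn) ?_ ?_
      · rwa [degree_map]
      · intro x _
        rw [eval_map_algebraMap, aeval_ofReal_eq]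
    have hNz : aeval z N = eval z (Lagrange.nodal s (fun x : ℝ => (x : ℂ))) := by
      rw [hN, Lagrange.nodal_eq, Lagrange.eval_nodal, map_prod]
      simp
    have hFz : aeval z F = F.leadingCoeff * aeval z N := by
      conv_lhs => rw [hFN]
      simp
    have hNz0 : aeval z N ≠ 0 := by
      intro h; rw [hFz, h, mul_zero] at hz; exact hz rfl
    have hlc' : (F.leadingCoeff : ℂ) ≠ 0 := by exact_mod_cast hlc
    rw [hFz, ← eval_map_algebraMap R z, hR, Lagrange.eval_interpolate_not_at_node _ hzx, ← hNz,
      mul_comm (F.leadingCoeff : ℂ), mul_div_mul_left _ _ hNz0, Finset.sum_div]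
    refine Finset.sum_congr rfl fun x hx => ?_
    rw [hw]
    simp only [Lagrange.nodalWeight, id]
    push_cast
    ring
  have hGF : ∀ z : ℂ, aeval z F ≠ 0 → aeval z G / aeval z F
      = aeval z Q / F.leadingCoeff + ∑ x ∈ s, (w x : ℂ) / (z - x) := by
    intro z hz
    have hFz : aeval z F = F.leadingCoeff * aeval z N := by
      conv_lhs => rw [hFN]
      simp
    have hNz0 : aeval z N ≠ 0 := by
      intro h; rw [hFz, h, mul_zero] at hz; exact hz rfl
    rw [← hRN z hz, ← hdiv, map_add, map_mul, add_div, add_comm]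
    congr 1
    rw [hFz, mul_comm, mul_div_mul_right _ _ hNz0]
  set T : ℝ[X] := C F.leadingCoeff⁻¹ * Q with hT
  have hGT : ∀ z : ℂ, aeval z F ≠ 0 → aeval z G / aeval z F
      = aeval z T + ∑ x ∈ s, (w x : ℂ) / (z - x) := by
    intro z hz
    rw [hGF z hz, hT]
    simp [div_eq_inv_mul]
  by_cases hT0 : T = 0
  · refine ⟨0, 0, s, w, le_rfl, fun x hx => ⟨(hwpos x hx).le, (hmem x).1 hx⟩, fun z hz => ?_⟩
    rw [hGT z hz, hT0]
    simp
  have hinf := exponent_le_one_of_im_div_pow_nonpos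
    (h := fun u => aeval (-u) T.reverse * (-1) ^ T.natDegree
      + u ^ T.natDegree * ∑ x ∈ s, (w x : ℂ) * (-u) / (1 + u * x))
    (x₀ := 0) (w := T.leadingCoeff * (-1) ^ T.natDegree) (k := T.natDegree)
    (by
      have h1 : Continuous fun u : ℂ => aeval (-u) T.reverse :=
        (Polynomial.continuous_aeval _).comp continuous_neg
      refine ContinuousAt.add (by fun_prop) (ContinuousAt.mul (by fun_prop) ?_)
      refine tendsto_finsetSum _ fun x _ => ?_
      exact ContinuousAt.div (f := fun u : ℂ => (w x : ℂ) * (-u)) (g := fun u : ℂ => 1 + u * x)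
        (by fun_prop) (by fun_prop) (by simp))
    (by
      have : aeval (0 : ℂ) T.reverse = T.leadingCoeff := by
        rw [← Complex.ofReal_zero, aeval_ofReal_eq, ← coeff_zero_eq_eval_zero, coeff_zero_reverse]
      simp [this])
    (mul_ne_zero (leadingCoeff_ne_zero.2 hT0) (pow_ne_zero _ (by norm_num)))
    (by
      intro u hu
      have hu0 : u ≠ 0 := by rintro rfl; simp at hu
      have hz : 0 < (-u⁻¹).im := by
        have : 0 < Complex.normSq u := Complex.normSq_pos.2 hu0
        simp only [Complex.neg_im, Complex.inv_im, neg_div, neg_neg]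
        positivity
      have h1 := him _ hz
      rw [hGT _ (hF _ hz)] at h1
      convert h1 using 2
      have hne : -u⁻¹ ≠ 0 := neg_ne_zero.2 (inv_ne_zero hu0)
      let _ := invertibleOfNonzero hne
      have h2 := eval₂_reverse_mul_pow (algebraMap ℝ ℂ) (-u⁻¹) T
      rw [invOf_eq_inv, inv_neg, inv_inv] at h2
      rw [aeval_def, aeval_def, ← h2, Complex.ofReal_zero, sub_zero, add_div]
      congr 1
      · rw [mul_div_assoc, ← div_pow]
        congr 2
        field_simp
      · rw [mul_div_cancel_left₀ _ (pow_ne_zero _ hu0)]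
        refine Finset.sum_congr rfl fun x _ => ?_
        have : -u⁻¹ - x ≠ 0 := by
          intro h
          have := congrArg Complex.im h
          simp only [Complex.sub_im, Complex.ofReal_im, sub_zero, Complex.zero_im] at this
          linarith
        have h3 : 1 + u * x = (-u) * (-u⁻¹ - x) := by field_simp; ring
        rw [h3, mul_comm (w x : ℂ), mul_div_mul_left _ _ (neg_ne_zero.2 hu0)])
  have hTlin : T = C (T.coeff 1) * X + C (T.coeff 0) := eq_X_add_C_of_natDegree_le_one hinf.1
  refine ⟨-T.coeff 1, T.coeff 0, s, w, ?_, fun x hx => ⟨(hwpos x hx).le, (hmem x).1 hx⟩,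
    fun z hz => ?_⟩
  · by_cases hd : T.natDegree = 1
    · have := hinf.2 hd
      rw [leadingCoeff, hd] at this
      linarith
    · rw [coeff_eq_zero_of_natDegree_lt (by have := hinf.1; omega), neg_zero]
  · rw [hGT z hz]
    conv_lhs => rw [hTlin]
    simp
    ring

/-- A rational function mapping the upper half-plane to the closed lower one is the sum of an
affine function of nonpositive slope and simple fractions with nonnegative residues. -/
theorem exists_partialFraction {F G : ℝ[X]} (hF : ∀ z : ℂ, 0 < z.im → aeval z F ≠ 0)
    (him : ∀ z : ℂ, 0 < z.im → (aeval z G / aeval z F).im ≤ 0) :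
    ∃ (b c : ℝ) (s : Finset ℝ) (w : ℝ → ℝ), 0 ≤ b ∧ (∀ x ∈ s, 0 ≤ w x ∧ F.eval x = 0) ∧
      ∀ z : ℂ, aeval z F ≠ 0 →
        aeval z G / aeval z F = c - b * z + ∑ x ∈ s, (w x : ℂ) / (z - x) := by
  have hF0 : F ≠ 0 := by rintro rfl; exact hF Complex.I (by simp) (by simp)
  obtain ⟨F₁, hF₁⟩ := EuclideanDomain.gcd_dvd_left F G
  obtain ⟨G₁, hG₁⟩ := EuclideanDomain.gcd_dvd_right F G
  set d := EuclideanDomain.gcd F G with hd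
  have hd0 : d ≠ 0 := by
    intro h
    rw [h, zero_mul] at hF₁
    exact hF0 hF₁
  have hco : IsCoprime F₁ G₁ := by
    refine ⟨EuclideanDomain.gcdA F G, EuclideanDomain.gcdB F G, ?_⟩
    apply mul_left_cancel₀ hd0
    have := EuclideanDomain.gcd_eq_gcd_ab F G
    rw [← hd] at this
    generalize EuclideanDomain.gcdA F G = A at this ⊢
    generalize EuclideanDomain.gcdB F G = B at this ⊢
    linear_combination A * -hF₁ + B * -hG₁ - this
  have hq : ∀ z : ℂ, aeval z F ≠ 0 → aeval z F₁ ≠ 0 ∧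
      aeval z G / aeval z F = aeval z G₁ / aeval z F₁ := by
    intro z hz
    rw [hF₁, map_mul] at hz
    refine ⟨right_ne_zero_of_mul hz, ?_⟩
    rw [hF₁, hG₁, map_mul, map_mul, mul_div_mul_left _ _ (left_ne_zero_of_mul hz)]
  obtain ⟨b, c, s, w, hb, hs, h⟩ := exists_partialFraction_of_isCoprime hco
    (fun z hz => (hq z (hF z hz)).1) (fun z hz => (hq z (hF z hz)).2 ▸ him z hz)
  refine ⟨b, c, s, w, hb, fun x hx => ⟨(hs x hx).1, ?_⟩, fun z hz => ?_⟩
  · rw [hF₁, eval_mul, (hs x hx).2, mul_zero]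
  · rw [(hq z hz).2, h z (hq z hz).1]

/-- The rational function `G / F` maps the open upper half-plane to the closed lower one and has
no poles on the ray `[a, ∞)`. -/
structure IsLowerPick (F G : ℝ[X]) (a : ℝ) : Prop where
  ne_zero_of_im_pos : ∀ z : ℂ, 0 < z.im → aeval z F ≠ 0
  ne_zero_of_le : ∀ x : ℝ, a ≤ x → F.eval x ≠ 0
  im_nonpos : ∀ z : ℂ, 0 < z.im → (aeval z G / aeval z F).im ≤ 0

namespace IsLowerPick

variable {F G : ℝ[X]} {a : ℝ}

theorem exists_repr (h : IsLowerPick F G a) :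
    ∃ (b c : ℝ) (s : Finset ℝ) (w : ℝ → ℝ), 0 ≤ b ∧ (∀ x ∈ s, 0 ≤ w x ∧ x < a) ∧
      (∀ z : ℂ, 0 < z.im →
        aeval z G / aeval z F = c - b * z + ∑ x ∈ s, (w x : ℂ) / (z - x)) ∧
      ∀ t : ℝ, a ≤ t → G.eval t / F.eval t = c - b * t + ∑ x ∈ s, w x / (t - x) := by
  obtain ⟨b, c, s, w, hb, hs, hz⟩ := exists_partialFraction h.ne_zero_of_im_pos h.im_nonpos
  refine ⟨b, c, s, w, hb, fun x hx => ⟨(hs x hx).1, ?_⟩,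
    fun z hz' => hz z (h.ne_zero_of_im_pos z hz'), fun t ht => ?_⟩
  · by_contra! hax
    exact h.ne_zero_of_le x hax (hs x hx).2
  · have := hz t (by rw [aeval_ofReal_eq]; exact_mod_cast h.ne_zero_of_le t ht)
    rw [aeval_ofReal_eq, aeval_ofReal_eq] at this
    exact_mod_cast this

theorem antitoneOn (h : IsLowerPick F G a) :
    AntitoneOn (fun t => G.eval t / F.eval t) (Set.Ici a) := by
  obtain ⟨b, c, s, w, hb, hs, -, hr⟩ := h.exists_repr
  intro x hx y hy hxy
  simp only [Set.mem_Ici] at hx hy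
  simp only [hr x hx, hr y hy]
  have h1 : b * x ≤ b * y := by gcongr
  have h2 : ∑ k ∈ s, w k / (y - k) ≤ ∑ k ∈ s, w k / (x - k) := by
    refine Finset.sum_le_sum fun k hk => ?_
    have := hs k hk
    exact div_le_div_of_nonneg_left this.1 (by linarith) (by linarith)
  linarith

/-- The tangent inequality expressing convexity of `G / F`, together with the sign of its
derivative. -/
theorem tangent_le (h : IsLowerPick F G a) {δ : ℝ} (hδ : 0 < δ) :
    let D := (G.derivative.eval (a + δ) * F.eval (a + δ)
      - G.eval (a + δ) * F.derivative.eval (a + δ)) / F.eval (a + δ) ^ 2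
    D ≤ 0 ∧ G.eval (a + δ) / F.eval (a + δ) - δ * D ≤ G.eval a / F.eval a := by
  obtain ⟨b, c, s, w, hb, hs, -, hr⟩ := h.exists_repr
  intro D
  have hder1 : HasDerivAt (fun t => G.eval t / F.eval t) D (a + δ) :=
    (G.hasDerivAt _).div (F.hasDerivAt _) (h.ne_zero_of_le _ (by linarith))
  have hder2 : HasDerivAt (fun t => c - b * t + ∑ x ∈ s, w x / (t - x))
      (-b + ∑ x ∈ s, -(w x / (a + δ - x) ^ 2)) (a + δ) := by
    refine HasDerivAt.add ?_ ?_
    · simpa using ((hasDerivAt_id (a + δ)).const_mul b).const_sub c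
    · refine HasDerivAt.fun_sum fun x hx => ?_
      have hx := hs x hx
      have hu : HasDerivAt (fun t : ℝ => t - x) 1 (a + δ) := (hasDerivAt_id _).sub_const x
      simpa [div_eq_mul_inv, neg_div] using
        (hu.fun_inv (show 0 < a + δ - x by linarith).ne').const_mul (w x)
  have hD : D = -b + ∑ x ∈ s, -(w x / (a + δ - x) ^ 2) := by
    refine hder1.unique (hder2.congr_of_eventuallyEq ?_)
    filter_upwards [Ioi_mem_nhds (show a < a + δ by linarith)] with t ht
    exact hr t (le_of_lt ht)
  have hnn : 0 ≤ ∑ x ∈ s, w x / (a + δ - x) ^ 2 :=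
    Finset.sum_nonneg fun x hx => div_nonneg (hs x hx).1 (sq_nonneg _)
  have hterm : ∑ x ∈ s, (w x / (a + δ - x) + δ * (w x / (a + δ - x) ^ 2))
      ≤ ∑ x ∈ s, w x / (a - x) := by
    refine Finset.sum_le_sum fun x hx => ?_
    obtain ⟨hw, hx⟩ := hs x hx
    have hu : 0 < a - x := by linarith
    have hv : 0 < a + δ - x := by linarith
    have : w x / (a - x) - (w x / (a + δ - x) + δ * (w x / (a + δ - x) ^ 2))
        = w x * δ ^ 2 / ((a - x) * (a + δ - x) ^ 2) := by
      field_simp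
      ring
    have h0 : 0 ≤ w x * δ ^ 2 / ((a - x) * (a + δ - x) ^ 2) := by positivity
    linarith
  rw [Finset.sum_add_distrib, ← Finset.mul_sum] at hterm
  rw [Finset.sum_neg_distrib] at hD
  refine ⟨by linarith, ?_⟩
  rw [hr a le_rfl, hr (a + δ) (by linarith), hD]
  nlinarith

theorem eq_of_im_eq_zero (h : IsLowerPick F G a) {z : ℂ} (hz : 0 < z.im)
    (hz0 : (aeval z G / aeval z F).im = 0) {t : ℝ} (ht : a ≤ t) :
    ((G.eval t / F.eval t : ℝ) : ℂ) = aeval z G / aeval z F := by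
  obtain ⟨b, c, s, w, hb, hs, hr, hr'⟩ := h.exists_repr
  have hterm : ∀ x ∈ s, ((w x : ℂ) / (z - x)).im = -(w x * z.im / Complex.normSq (z - x)) := by
    intro x _
    simp [Complex.div_im]
  have hpos : ∀ x ∈ s, 0 < Complex.normSq (z - x) := by
    intro x _
    refine Complex.normSq_pos.2 fun h0 => ?_
    have := congrArg Complex.im h0
    simp at this
    linarith
  have hnn : ∀ x ∈ s, 0 ≤ w x * z.im / Complex.normSq (z - x) := fun x hx =>
    div_nonneg (mul_nonneg (hs x hx).1 hz.le) (hpos x hx).le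
  have him : (c - b * z + ∑ x ∈ s, (w x : ℂ) / (z - x)).im
      = -(b * z.im) - ∑ x ∈ s, w x * z.im / Complex.normSq (z - x) := by
    rw [Complex.add_im, Complex.im_sum, Finset.sum_congr rfl hterm, Finset.sum_neg_distrib]
    simp
    ring
  have hsum := Finset.sum_nonneg hnn
  rw [hr z hz, him] at hz0
  have hb0 : b = 0 := by
    have := mul_nonneg hb hz.le
    exact (mul_eq_zero.1 (show b * z.im = 0 by linarith)).resolve_right hz.ne'
  have hw0 : ∀ x ∈ s, w x = 0 := by
    intro x hx
    rw [hb0] at hz0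
    have := (Finset.sum_eq_zero_iff_of_nonneg hnn).1 (by linarith) x hx
    rw [div_eq_zero_iff, mul_eq_zero] at this
    exact (this.resolve_right (hpos x hx).ne').resolve_right hz.ne'
  rw [hr z hz, hr' t ht, hb0, Finset.sum_eq_zero fun x hx => by rw [hw0 x hx, zero_div],
    Finset.sum_eq_zero fun x hx => by rw [hw0 x hx, Complex.ofReal_zero, zero_div]]
  simp

end IsLowerPick

namespace MvPolynomial

section Line

variable {σ K : Type*} [CommRing K]

/-- The restriction of a multivariate polynomial to the line `t ↦ x + t v`. -/
noncomputable def line (P : MvPolynomial σ K) (x v : σ → K) : K[X] :=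
  aeval (fun j => Polynomial.C (x j) + Polynomial.C (v j) * Polynomial.X) P

theorem aeval_line {L : Type*} [CommRing L] [Algebra K L] (P : MvPolynomial σ K) (x v : σ → K)
    (t : L) : Polynomial.aeval t (line P x v)
      = aeval (fun j => algebraMap K L (x j) + t * algebraMap K L (v j)) P := by
  rw [line, ← AlgHom.comp_apply, comp_aeval]
  congr 2
  funext j
  simp only [map_add, map_mul, Polynomial.aeval_C, Polynomial.aeval_X, mul_comm t]

theorem eval_line (P : MvPolynomial σ K) (x v : σ → K) (t : K) :
    (line P x v).eval t = eval (fun j => x j + t * v j) P := by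
  have := aeval_line P x v t
  rw [Polynomial.coe_aeval_eq_eval, MvPolynomial.aeval_eq_eval] at this
  exact this

theorem derivative_line_single [DecidableEq σ] (P : MvPolynomial σ K) (x : σ → K) (i : σ) :
    (line P x (Pi.single i 1)).derivative = line (pderiv i P) x (Pi.single i 1) := by
  unfold line
  induction P using MvPolynomial.induction_on with
  | C a => simp
  | add p q hp hq => simp [hp, hq]
  | mul_X p j hp =>
    rw [Derivation.leibniz, map_mul, Polynomial.derivative_mul, hp, pderiv_X, map_add,
      smul_eq_mul, smul_eq_mul, map_mul, map_mul, aeval_X]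
    by_cases h : j = i
    · subst h
      simp
      ring
    · simp [h]
      ring

end Line

variable {σ : Type*}

/-- A point is above the roots of `P` when `P` vanishes nowhere on the product of the sets
`ℍ ∪ [a i, ∞)`. -/
def AboveRoots (P : MvPolynomial σ ℝ) (a : σ → ℝ) : Prop :=
  ∀ z : σ → ℂ, (∀ i, 0 < (z i).im ∨ (z i).im = 0 ∧ a i ≤ (z i).re) → aeval z P ≠ 0

/-- The barrier function `∂ᵢ P / P`. -/
noncomputable def barrier (P : MvPolynomial σ ℝ) (i : σ) (a : σ → ℝ) : ℝ :=
  eval a (pderiv i P) / eval a P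

theorem aeval_ofReal_eq (P : MvPolynomial σ ℝ) (x : σ → ℝ) :
    aeval (fun i => (x i : ℂ)) P = ((eval x P : ℝ) : ℂ) := by
  have := aeval_algebraMap_apply ℂ x P
  rwa [MvPolynomial.aeval_eq_eval] at this

namespace AboveRoots

variable {P : MvPolynomial σ ℝ} {a : σ → ℝ}

theorem mono (hP : P.AboveRoots a) {b : σ → ℝ} (hab : a ≤ b) : P.AboveRoots b :=
  fun z hz => hP z fun i => (hz i).imp_right fun h => ⟨h.1, (hab i).trans h.2⟩

theorem eval_ne_zero (hP : P.AboveRoots a) {x : σ → ℝ} (hx : a ≤ x) : eval x P ≠ 0 := by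
  have := hP (fun i => (x i : ℂ)) fun i => Or.inr ⟨Complex.ofReal_im _, by simpa using hx i⟩
  rw [aeval_ofReal_eq] at this
  exact_mod_cast this

theorem im_pderiv_div_nonpos (hP : P.AboveRoots a) (i : σ) {z : σ → ℂ}
    (hz : ∀ i, 0 < (z i).im ∨ (z i).im = 0 ∧ a i ≤ (z i).re) :
    (aeval z (pderiv i P) / aeval z P).im ≤ 0 := by
  classical
  set q := line (map (algebraMap ℝ ℂ) P) z (Pi.single i 1) with hq
  have hq0 : q.eval 0 = aeval z P := by
    rw [hq, eval_line]
    simp [eval_map, aeval_def]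
  have hq1 : q.derivative.eval 0 = aeval z (pderiv i P) := by
    rw [hq, derivative_line_single, eval_line, pderiv_map]
    simp [eval_map, aeval_def]
  have hne : q.eval 0 ≠ 0 := hq0 ▸ hP z hz
  rw [← hq0, ← hq1, (IsAlgClosed.splits q).eval_derivative_div_eval_of_ne_zero hne]
  have hterm : ∀ ζ ∈ q.roots, (1 / (0 - ζ)).im ≤ 0 := by
    intro ζ hζ
    have hroot : q.eval ζ = 0 := (Polynomial.mem_roots'.1 hζ).2
    have him : ζ.im ≤ 0 := by
      by_contra! hpos
      rw [hq, eval_line, eval_map, ← aeval_def] at hroot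
      refine hP _ (fun j => ?_) hroot
      by_cases hj : j = i
      · subst hj
        left
        have : 0 ≤ (z j).im := (hz j).elim le_of_lt fun h => h.1.ge
        simp
        linarith
      · simpa [Pi.single_eq_of_ne hj] using hz j
    rw [one_div, Complex.inv_im, zero_sub, Complex.neg_im, neg_neg]
    exact div_nonpos_of_nonpos_of_nonneg him (Complex.normSq_nonneg _)
  have : ∀ s : Multiset ℂ, (∀ ζ ∈ s, (1 / (0 - ζ)).im ≤ 0) →
      (s.map fun ζ => 1 / (0 - ζ)).sum.im ≤ 0 := by
    intro s
    induction s using Multiset.induction_on with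
    | empty => simp
    | cons ζ s ih =>
      intro h
      rw [Multiset.map_cons, Multiset.sum_cons, Complex.add_im]
      have h1 := h ζ (Multiset.mem_cons_self _ _)
      have h2 := ih fun ξ hξ => h ξ (Multiset.mem_cons_of_mem hξ)
      linarith
  exact this _ hterm

theorem isLowerPick_line (hP : P.AboveRoots a) (i : σ) {x v : σ → ℝ} {c : ℝ} (hv : 0 ≤ v)
    (hx : ∀ j, a j ≤ x j + c * v j) :
    IsLowerPick (line P x v) (line (pderiv i P) x v) c := by
  have hmem : ∀ z : ℂ, 0 < z.im → ∀ j,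
      0 < ((x j : ℂ) + z * (v j : ℂ)).im ∨
        ((x j : ℂ) + z * (v j : ℂ)).im = 0 ∧ a j ≤ ((x j : ℂ) + z * (v j : ℂ)).re := by
    intro z hz j
    rcases (hv j).eq_or_lt with h | h
    · have h : v j = 0 := h.symm
      right
      simpa [h] using hx j
    · left
      simpa using mul_pos hz h
  refine ⟨fun z hz => ?_, fun t ht => ?_, fun z hz => ?_⟩
  · rw [aeval_line]
    exact hP _ (hmem z hz)
  · rw [eval_line]
    refine hP.eval_ne_zero fun j => (hx j).trans ?_
    have := mul_le_mul_of_nonneg_right ht (hv j)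
    linarith
  · rw [aeval_line, aeval_line]
    exact hP.im_pderiv_div_nonpos i (hmem z hz)

theorem barrier_anti (hP : P.AboveRoots a) (i : σ) {x : σ → ℝ} (hx : a ≤ x) :
    barrier P i x ≤ barrier P i a := by
  have h := (hP.isLowerPick_line i (x := a) (v := x - a) (c := 0) (sub_nonneg.2 hx)
    (by simp)).antitoneOn (Set.mem_Ici.2 le_rfl) (Set.mem_Ici.2 zero_le_one) zero_le_one
  simpa [eval_line, barrier] using h

/-- The operator `1 - ∂ᵢ` preserves being above the roots when the barrier is below one. -/
theorem sub_pderiv [Finite σ] (hP : P.AboveRoots a) {i : σ} (hi : barrier P i a < 1) :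
    (P - pderiv i P).AboveRoots a := by
  intro z hz h0
  have hPz := hP z hz
  have h1 : aeval z (pderiv i P) / aeval z P = 1 := by
    rw [map_sub, sub_eq_zero] at h0
    rw [← h0, div_self hPz]
  set x : σ → ℝ := fun j => (z j).re with hxdef
  set v : σ → ℝ := fun j => (z j).im with hvdef
  have hv : 0 ≤ v := fun j => (hz j).elim le_of_lt fun h => h.1.ge
  obtain ⟨c, hc⟩ : ∃ c : ℝ, ∀ j, (a j - x j) / v j ≤ c := by
    obtain ⟨c, hc⟩ := (Set.finite_range fun j => (a j - x j) / v j).bddAbove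
    exact ⟨c, fun j => hc ⟨j, rfl⟩⟩
  have hx : ∀ j, a j ≤ x j + c * v j := by
    intro j
    rcases hz j with h | h
    · have := (div_le_iff₀ (show 0 < v j from h)).1 (hc j)
      linarith
    · rw [show v j = 0 from h.1, mul_zero, add_zero]
      exact h.2
  have hpick := hP.isLowerPick_line i hv hx
  have hval : ∀ Q : MvPolynomial σ ℝ, Polynomial.aeval Complex.I (line Q x v) = aeval z Q := by
    intro Q
    rw [aeval_line]
    congr 2
    funext j
    apply Complex.ext <;> simp [hxdef, hvdef]
  have h2 := hpick.eq_of_im_eq_zero (z := Complex.I) (by simp)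
    (by rw [hval, hval, h1, Complex.one_im]) le_rfl
  rw [hval, hval, h1, eval_line, eval_line] at h2
  have h3 : barrier P i (fun j => x j + c * v j) = 1 := by
    unfold barrier
    exact_mod_cast h2
  have := hP.barrier_anti i (x := fun j => x j + c * v j) hx
  linarith

/-- Applying `1 - ∂ᵢ` and moving up by `δ` in direction `i` does not increase the barriers. -/
theorem barrier_sub_pderiv_le [DecidableEq σ] (hP : P.AboveRoots a) {i : σ} {δ : ℝ} (hδ : 0 < δ)
    (hi : barrier P i a ≤ 1 - 1 / δ) (j : σ) :
    barrier (P - pderiv i P) j (a + Pi.single i δ) ≤ barrier P j a := by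
  have ha' : a ≤ a + Pi.single i δ := le_add_of_nonneg_right (Pi.single_nonneg.2 hδ.le)
  have hpick := hP.isLowerPick_line j (x := a) (v := Pi.single i 1) (c := 0)
    (Pi.single_nonneg.2 zero_le_one) (by simp)
  obtain ⟨hD, hle⟩ := hpick.tangent_le hδ
  have hval : ∀ Q : MvPolynomial σ ℝ,
      (line Q a (Pi.single i 1)).eval (0 + δ) = eval (a + Pi.single i δ) Q := by
    intro Q
    rw [eval_line]
    congr 2
    funext k
    by_cases hk : k = i
    · subst hk; simp
    · simp [Pi.single_eq_of_ne hk]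
  have hval0 : ∀ Q : MvPolynomial σ ℝ, (line Q a (Pi.single i 1)).eval 0 = eval a Q := by
    intro Q; simp [eval_line]
  simp only [derivative_line_single, hval, hval0] at hD hle
  have hψ : barrier P i (a + Pi.single i δ) ≤ 1 - 1 / δ := (hP.barrier_anti i ha').trans hi
  have hne := hP.eval_ne_zero ha'
  unfold barrier at hψ ⊢
  rw [map_sub, map_sub, map_sub]
  have hcomm : pderiv j (pderiv i P) = pderiv i (pderiv j P) := by
    have : ⁅pderiv (R := ℝ) j, pderiv i⁆ =
        (0 : Derivation ℝ (MvPolynomial σ ℝ) (MvPolynomial σ ℝ)) := by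
      ext k
      simp [Derivation.commutator_apply, pderiv_X, Pi.single_apply, apply_ite]
    rw [← sub_eq_zero, ← Derivation.commutator_apply, this, Derivation.zero_apply]
  rw [hcomm]
  refine le_trans ?_ hle
  generalize eval (a + Pi.single i δ) P = p at *
  generalize eval (a + Pi.single i δ) (pderiv i P) = p' at *
  generalize eval (a + Pi.single i δ) (pderiv j P) = g at *
  generalize eval (a + Pi.single i δ) (pderiv i (pderiv j P)) = g' at *
  set D := (g' * p - g * p') / p ^ 2 with hDdef
  have hδ' : 0 < 1 / δ := by positivity
  have hpos : 0 < 1 - p' / p := by linarith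
  have hpp : p - p' ≠ 0 := by
    intro h
    rw [sub_eq_zero] at h
    rw [← h, div_self hne] at hpos
    linarith
  have hkey : (g - g') / (p - p') = g / p - D / (1 - p' / p) := by
    have : 1 - p' / p = (p - p') / p := by field_simp
    rw [this, hDdef]
    field_simp
    ring
  have hinv : 1 / (1 - p' / p) ≤ δ := by
    rw [div_le_iff₀ hpos]
    have := mul_le_mul_of_nonneg_left (show 1 / δ ≤ 1 - p' / p by linarith) hδ.le
    rwa [mul_one_div_cancel hδ.ne'] at this
  rw [hkey, div_eq_mul_one_div D]
  nlinarith

theorem foldr_sub_pderiv [Finite σ] [DecidableEq σ] (hP : P.AboveRoots a) {δ κ : ℝ} (hδ : 0 < δ)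
    (hκ : κ ≤ 1 - 1 / δ) (hb : ∀ j, barrier P j a ≤ κ) (l : List σ) :
    (l.foldr (fun i g => g - pderiv i g) P).AboveRoots
        (a + (l.map fun i => Pi.single i δ).sum) ∧
      ∀ j, barrier (l.foldr (fun i g => g - pderiv i g) P) j
        (a + (l.map fun i => Pi.single i δ).sum) ≤ κ := by
  induction l with
  | nil => simpa using ⟨hP, hb⟩
  | cons i l ih =>
    obtain ⟨h1, h2⟩ := ih
    have hδ' : 0 < 1 / δ := by positivity
    have hshift : a + ((i :: l).map fun i => Pi.single i δ).sum
        = a + (l.map fun i => Pi.single i δ).sum + Pi.single i δ := by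
      rw [List.map_cons, List.sum_cons]
      abel
    rw [hshift, List.foldr_cons]
    refine ⟨(h1.sub_pderiv (i := i) (by linarith [h2 i])).mono ?_, fun j => ?_⟩
    · exact le_add_of_nonneg_right (Pi.single_nonneg.2 hδ.le)
    · exact (h1.barrier_sub_pderiv_le hδ ((h2 i).trans hκ) j).trans (h2 j)

end AboveRoots

end MvPolynomial

section Determinant

open Matrix

variable {m n : ℕ} {A : Fin m → Matrix (Fin n) (Fin n) ℂ}

theorem det_sum_smul_ne_zero (hA : ∀ i, (A i).PosSemidef) (hsum : ∑ i, A i = 1) {z : Fin m → ℂ}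
    (hz : ∀ i, 0 < (z i).im ∨ (z i).im = 0 ∧ 0 < (z i).re) : (∑ i, z i • A i).det ≠ 0 := by
  intro hdet
  obtain ⟨v, hv, hMv⟩ := Matrix.exists_mulVec_eq_zero_iff.2 hdet
  have hnn : ∀ i, 0 ≤ star v ⬝ᵥ (A i *ᵥ v) := fun i => (hA i).dotProduct_mulVec_nonneg v
  obtain ⟨β, hβ⟩ : ∃ β : Fin m → ℝ, ∀ i, star v ⬝ᵥ (A i *ᵥ v) = β i :=
    ⟨fun i => (star v ⬝ᵥ (A i *ᵥ v)).re, fun i => by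
      apply Complex.ext
      · simp
      · simpa using (Complex.nonneg_iff.1 (hnn i)).2.symm⟩
  have hβ0 : ∀ i, 0 ≤ β i := fun i => by
    have := hnn i
    rw [hβ] at this
    exact_mod_cast this
  have hexp : ∀ w : Fin m → ℂ, star v ⬝ᵥ ((∑ i, w i • A i) *ᵥ v) = ∑ i, w i * (β i : ℂ) := by
    intro w
    rw [Matrix.sum_mulVec, dotProduct_sum]
    exact Finset.sum_congr rfl fun i _ => by
      rw [Matrix.smul_mulVec, dotProduct_smul, hβ, smul_eq_mul]
  have hzero : ∑ i, z i * (β i : ℂ) = 0 := by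
    rw [← hexp, hMv, dotProduct_zero]
  have him : ∑ i, (z i).im * β i = 0 := by
    simpa using congrArg Complex.im hzero
  have hre : ∑ i, (z i).re * β i = 0 := by
    simpa using congrArg Complex.re hzero
  have him0 : ∀ i, (z i).im * β i = 0 := fun i =>
    (Finset.sum_eq_zero_iff_of_nonneg fun j _ =>
      mul_nonneg ((hz j).elim le_of_lt fun h => h.1.ge) (hβ0 j)).1 him i (Finset.mem_univ i)
  have hre_nn : ∀ i, 0 ≤ (z i).re * β i := by
    intro i
    rcases hz i with h | h
    · rw [(mul_eq_zero.1 (him0 i)).resolve_left h.ne', mul_zero]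
    · exact mul_nonneg h.2.le (hβ0 i)
  have hβz : ∀ i, β i = 0 := by
    intro i
    rcases hz i with h | h
    · exact (mul_eq_zero.1 (him0 i)).resolve_left h.ne'
    · have := (Finset.sum_eq_zero_iff_of_nonneg fun j _ => hre_nn j).1 hre i (Finset.mem_univ i)
      exact (mul_eq_zero.1 this).resolve_left h.2.ne'
  have hvv : star v ⬝ᵥ v = 0 := by
    have := hexp 1
    simpa [hsum, hβz] using this
  exact hv (dotProduct_star_self_eq_zero.1 hvv)

theorem map_mixedMat {R : Type*} [CommRing R] (f : MvPolynomial (Fin m) ℂ →+* R)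
    (A : Fin m → Matrix (Fin n) (Fin n) ℂ) :
    f.mapMatrix (mixedMat A) = ∑ i, f (MvPolynomial.X i) • (A i).map fun c => f (MvPolynomial.C c) := by
  rw [mixedMat, map_sum]
  refine Finset.sum_congr rfl fun i _ => ?_
  ext a b
  simp

theorem eval_det_mixedMat (A : Fin m → Matrix (Fin n) (Fin n) ℂ) (z : Fin m → ℂ) :
    MvPolynomial.eval z (mixedMat A).det = (∑ i, z i • A i).det := by
  rw [RingHom.map_det, map_mixedMat]
  simp

theorem exists_map_eq_det_mixedMat (hA : ∀ i, (A i).PosSemidef) :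
    ∃ D : MvPolynomial (Fin m) ℝ, MvPolynomial.map (algebraMap ℝ ℂ) D = (mixedMat A).det := by
  have hconj : MvPolynomial.map (starRingEnd ℂ) (mixedMat A).det = (mixedMat A).det := by
    rw [RingHom.map_det, map_mixedMat, ← Matrix.det_transpose (mixedMat A)]
    refine congrArg Matrix.det (Matrix.ext fun a b => ?_)
    simp only [mixedMat, Matrix.sum_apply, Matrix.transpose_apply, Matrix.smul_apply,
      Matrix.map_apply, MvPolynomial.map_X, MvPolynomial.map_C]
    refine Finset.sum_congr rfl fun i _ => ?_
    rw [← (hA i).1.apply b a]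
    rfl
  refine MvPolynomial.mem_range_map_iff_coeffs_subset.2 fun c hc => ?_
  obtain ⟨k, -, rfl⟩ := MvPolynomial.mem_coeffs_iff.1 hc
  have := congrArg (MvPolynomial.coeff k) hconj
  rw [MvPolynomial.coeff_map] at this
  exact ⟨_, Complex.conj_eq_iff_re.1 this⟩

theorem eval_pderiv_det_mixedMat (hsum : ∑ i, A i = 1) {t : ℂ} (ht : t ≠ 0) (j : Fin m) :
    MvPolynomial.eval (fun _ => t) (MvPolynomial.pderiv j (mixedMat A).det)
      = t ^ n * (t⁻¹ * (A j).trace) := by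
  have hline : MvPolynomial.line (mixedMat A).det (fun _ => t) (Pi.single j 1)
      = Polynomial.C t ^ n *
        det (1 + (Polynomial.X : ℂ[X]) • (t⁻¹ • A j).map Polynomial.C) := by
    have hdet : MvPolynomial.line (mixedMat A).det (fun _ => t) (Pi.single j 1)
        = det (∑ i, (Polynomial.C t + Polynomial.C ((Pi.single j 1 : Fin m → ℂ) i) * Polynomial.X)
          • (A i).map Polynomial.C) := by
      have := (RingHom.map_det ((MvPolynomial.aeval (fun i : Fin m => Polynomial.C t
        + Polynomial.C ((Pi.single j 1 : Fin m → ℂ) i) * Polynomial.X)).toRingHom :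
          MvPolynomial (Fin m) ℂ →+* ℂ[X]) (mixedMat A))
      rw [map_mixedMat] at this
      simpa [MvPolynomial.line] using this
    have hC : ∑ i, (A i).map Polynomial.C = (1 : Matrix (Fin n) (Fin n) ℂ[X]) := by
      have := congrArg (Polynomial.C : ℂ →+* ℂ[X]).mapMatrix hsum
      simpa only [map_sum, map_one, RingHom.mapMatrix_apply] using this
    have hsmul := Matrix.det_smul (1 + (Polynomial.X : ℂ[X]) • (t⁻¹ • A j).map Polynomial.C)
      (Polynomial.C t)
    rw [Fintype.card_fin] at hsmul
    rw [hdet, ← hsmul]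
    congr 1
    simp only [add_smul, Finset.sum_add_distrib]
    rw [← Finset.smul_sum, hC, smul_add]
    congr 1
    rw [Finset.sum_eq_single j]
    · refine Matrix.ext fun a b => ?_
      have : (Polynomial.C t : ℂ[X]) * Polynomial.C t⁻¹ = 1 := by
        rw [← Polynomial.C_mul, mul_inv_cancel₀ ht, Polynomial.C_1]
      simp only [Pi.single_eq_same, Matrix.smul_apply, Matrix.map_apply, smul_eq_mul,
        Polynomial.C_mul, Polynomial.C_1, one_mul]
      linear_combination (-(Polynomial.X : ℂ[X]) * Polynomial.C (A j a b)) * this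
    · intro i _ hi
      simp [Pi.single_eq_of_ne hi]
    · simp
  have h := congrArg (fun p : ℂ[X] => p.derivative.eval 0) hline
  simp only [MvPolynomial.derivative_line_single, MvPolynomial.eval_line, zero_mul,
    add_zero] at h
  rw [h, ← Polynomial.C_pow, Polynomial.derivative_C_mul, Polynomial.eval_C_mul,
    Matrix.derivative_det_one_add_X_smul, Matrix.trace_smul, smul_eq_mul]

end Determinant

theorem MvPolynomial.barrier_pow {σ : Type*} (P : MvPolynomial σ ℝ) (i : σ) {a : σ → ℝ}
    (h : eval a P ≠ 0) (r : ℕ) : barrier (P ^ r) i a = r * barrier P i a := by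
  unfold barrier
  cases r with
  | zero => simp
  | succ r =>
    rw [Derivation.leibniz_pow]
    simp
    field_simp
    ring

theorem mixedCharMv_eq_map {m n : ℕ} {A : Fin m → Matrix (Fin n) (Fin n) ℂ}
    {D : MvPolynomial (Fin m) ℝ} (hD : MvPolynomial.map (algebraMap ℝ ℂ) D = (mixedMat A).det)
    (r : ℕ) : mixedCharMv A r = MvPolynomial.map (algebraMap ℝ ℂ)
      ((List.finRange m).foldr (fun i g => g - MvPolynomial.pderiv i g) (D ^ r)) := by
  rw [mixedCharMv]
  induction List.finRange m with
  | nil => simp [hD]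
  | cons i l ih =>
    rw [List.foldr_cons, List.foldr_cons, ih, map_sub, MvPolynomial.pderiv_map]

theorem eval_mixedCharMv_ne_zero {m n : ℕ} {A : Fin m → Matrix (Fin n) (Fin n) ℂ}
    (hA : ∀ i, (A i).PosSemidef) (hsum : ∑ i, A i = 1) {ε : ℝ}
    (htr : ∀ i, ((A i).trace).re ≤ ε) (r : ℕ) {t δ x : ℝ} (ht : 0 < t) (hδ : 0 < δ)
    (hκ : r * ε / t ≤ 1 - 1 / δ) (hx : t + δ ≤ x) :
    MvPolynomial.eval (fun _ => (x : ℂ)) (mixedCharMv A r) ≠ 0 := by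
  obtain ⟨D, hD⟩ := exists_map_eq_det_mixedMat hA
  have haeval : ∀ (z : Fin m → ℂ) (Q : MvPolynomial (Fin m) ℝ), MvPolynomial.aeval z Q
      = MvPolynomial.eval z (MvPolynomial.map (algebraMap ℝ ℂ) Q) := by
    intro z Q
    rw [MvPolynomial.eval_map, MvPolynomial.aeval_def]
  have hDroots : D.AboveRoots fun _ => t := by
    intro z hz
    rw [haeval, hD, eval_det_mixedMat]
    exact det_sum_smul_ne_zero hA hsum fun i => (hz i).imp_right fun h => ⟨h.1, ht.trans_le h.2⟩
  have hDt : MvPolynomial.eval (fun _ => t) D = t ^ n := by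
    have h := haeval (fun _ => (t : ℂ)) D
    rw [hD, eval_det_mixedMat, ← Finset.smul_sum, hsum, Matrix.det_smul, Matrix.det_one,
      MvPolynomial.aeval_ofReal_eq D fun _ => t, Fintype.card_fin, mul_one] at h
    exact_mod_cast h
  have hbar : ∀ j, MvPolynomial.barrier D j (fun _ => t) = ((A j).trace).re / t := by
    intro j
    have h := haeval (fun _ => (t : ℂ)) (MvPolynomial.pderiv j D)
    rw [← MvPolynomial.pderiv_map, hD, eval_pderiv_det_mixedMat hsum (by exact_mod_cast ht.ne'),
      MvPolynomial.aeval_ofReal_eq _ fun _ => t] at h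
    have h' := congrArg Complex.re h
    rw [← Complex.ofReal_inv, ← Complex.ofReal_pow, Complex.re_ofReal_mul, Complex.re_ofReal_mul,
      Complex.ofReal_re] at h'
    rw [MvPolynomial.barrier, hDt, h']
    field_simp
  have hP : (D ^ r).AboveRoots fun _ => t := fun z hz => by
    rw [map_pow]
    exact pow_ne_zero _ (hDroots z hz)
  have hb : ∀ j, MvPolynomial.barrier (D ^ r) j (fun _ => t) ≤ r * ε / t := by
    intro j
    rw [MvPolynomial.barrier_pow _ _ (hDroots.eval_ne_zero le_rfl), hbar, ← mul_div_assoc]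
    gcongr
    exact htr j
  have hfinal := (hP.foldr_sub_pderiv hδ hκ hb (List.finRange m)).1
  have hle : (fun _ => t) + ((List.finRange m).map fun i => (Pi.single i δ : Fin m → ℝ)).sum
      ≤ fun _ => x := by
    rw [← List.ofFn_eq_map, List.sum_ofFn]
    intro k
    rw [Pi.add_apply, Finset.sum_apply, Finset.sum_pi_single]
    simpa using hx
  rw [mixedCharMv_eq_map hD, ← haeval, MvPolynomial.aeval_ofReal_eq _ fun _ => x]
  exact_mod_cast hfinal.eval_ne_zero hle

/-- **Root bound for mixed characteristic polynomials with repetition.** If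
`A₁ + ⋯ + A_m = I`, each `Aᵢ` is PSD with trace at most `ε ≤ (1-1/√r)²`, then the
univariate polynomial `[∏ᵢ(1-∂ᵢ)] det(z₁A₁+⋯+z_mA_m)^r |_{z=x}` does not vanish for
real `x ≥ (1+√(2r)·ε^{1/4})²`. -/
theorem mixed_char_poly_power_root_bound {m n r : ℕ} (hr : 2 ≤ r) (hm : 1 ≤ m)
    (hn : 1 ≤ n) (A : Fin m → Matrix (Fin n) (Fin n) ℂ)
    (hA : ∀ i, (A i).PosSemidef) (hsum : ∑ i, A i = 1)
    (ε : ℝ) (hε0 : 0 < ε) (hε1 : ε ≤ (1 - 1 / Real.sqrt r) ^ 2)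
    (htr : ∀ i, ((A i).trace).re ≤ ε) :
    (∀ x : ℝ, (1 + Real.sqrt (2 * r) * ε ^ ((1 : ℝ) / 4)) ^ 2 ≤ x →
      MvPolynomial.eval (fun _ => (x : ℂ)) (mixedCharMv A r) ≠ 0) ∧
    (∀ x : ℝ, MvPolynomial.eval (fun _ => (x : ℂ)) (mixedCharMv A r) = 0 →
      x < (1 + Real.sqrt (2 * r) * ε ^ ((1 : ℝ) / 4)) ^ 2) := by

  have hs : (1 + Real.sqrt (r * ε)) ^ 2 ≤ (1 + Real.sqrt (2 * r) * ε ^ ((1 : ℝ) / 4)) ^ 2 := by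
    have hr0 : (2 : ℝ) ≤ r := by exact_mod_cast hr
    have hε : ε ≤ 1 := by
      refine hε1.trans ?_
      have h1 : 1 ≤ Real.sqrt r := Real.one_le_sqrt.2 (by linarith)
      have h2 : 0 < 1 / Real.sqrt r := by positivity
      have h3 : 1 / Real.sqrt r ≤ 1 := (div_le_one (by linarith)).2 h1
      nlinarith
    have h4 : Real.sqrt ε ≤ ε ^ ((1 : ℝ) / 4) := by
      rw [Real.sqrt_eq_rpow]
      exact Real.rpow_le_rpow_of_exponent_ge hε0 hε (by norm_num)
    have h5 : Real.sqrt r ≤ Real.sqrt (2 * r) := Real.sqrt_le_sqrt (by linarith)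
    rw [Real.sqrt_mul (by linarith)]
    gcongr
  have hmain : ∀ x : ℝ, (1 + Real.sqrt (2 * r) * ε ^ ((1 : ℝ) / 4)) ^ 2 ≤ x →
      MvPolynomial.eval (fun _ => (x : ℂ)) (mixedCharMv A r) ≠ 0 := by
    intro x hx
    have hpos : 0 < Real.sqrt (r * ε) := Real.sqrt_pos.2 (by positivity)
    have hsq : Real.sqrt (r * ε) ^ 2 = r * ε := Real.sq_sqrt (by positivity)
    set u := Real.sqrt (r * ε)
    refine eval_mixedCharMv_ne_zero hA hsum htr r (t := u + u ^ 2) (δ := 1 + u) (by positivity)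
      (by positivity) (le_of_eq ?_) (by nlinarith)
    rw [← hsq]
    field_simp
    ring
  refine ⟨hmain, fun x hx => ?_⟩
  by_contra! hle
  exact hmain x hle hx
end
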